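/- arXiv:2503.08383 — 2 statements merged into one kernel-verified Lean document; each statement's English description precedes it below -/
import Mathlib

section
/- Let p > 1, let R > ρ > 0, and let T be the torus T = {(x,y,t) ∈ ℍⁿ : (r−R)² + t² < ρ²} with r = √(|x|²+|y|²), S = {(x,y,t) : t = 0, r = R}, and d(ξ) = ρ − √((r−R)² + t²). Define β(p,n) as follows: β(p,n) = max{ (2n+p−2)/(p−1), (2n−p+1)/(2(2−p)) } if 1 < p < 2; β(p,n) = 2n if p = 2; β(p,n) = 2n+p−2 if p ≥ (13+√(32n−7))/8; and β(p,n) = 1 + 1/a(p,n) if 2 < p < (13+√(32n−7))/8, where a(p,n) is the unique positive solution of (2n+p−3)² a² + 4( (p−2)(2n+p−3) + (p−1)(2n−1) ) a − 4(2p−3) = 0. If R ≥ ρ + ((2n−1)ρ/4)^{1/3} and R ≥ β(p,n) ρ, then Δ_{p,ℍⁿ} d(ξ) ≤ 0 at every point ξ ∈ T ∖ S. -/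
/-! A function of the form `h (r, t)` satisfies `X_i h = h_r x_i / r + 2 y_i h_t` and
`Y_i h = h_r y_i / r - 2 x_i h_t`. Hence `|∇d|² = d_r² + 4 r² d_t²`, the horizontal field
`|∇d|^{p-2} ∇d` has components `A x_i + B y_i` and `A y_i - B x_i` with `A`, `B` functions of
`(r, t)` only (`torusA`, `torusB`), and its horizontal divergence is `2n A + r A_r + 2 r² B_t`
(`pLap_torus_eq`).

With `a = r - R`, `D = a² + t²` and `M = a² + 4 r² t²`, this divergence is a negative multiple of
`(p-1) a² t² (1-4r²)² + 4 r² D² + (2n-1) (a/r) M D + 4 (p-2) r a t² D`, so everything reduces to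
the nonnegativity of this expression (`torus_poly_nonneg`). It is clear for `a ≥ 0`. For
`a = -k < 0` and `s = √D`, put `N = 2n + p - 3`; the two hypotheses on `R` give
`(2n-1) s ≤ 4 r³` and `2 N s ≤ 3 r`, and the first term may be dropped: what remains follows from
`4 s³ - 4 k³ - 6 k (s² - k²) = 2 (s - k)² (2 s + k) ≥ 0`. In each of the four ranges of `p`, only
the bound `β ≥ 1 + 2 N / 3` is needed (`beta_bound`). -/

open MeasureTheory Real Set Filter

noncomputable section

/-- A point of the Heisenberg group ℍⁿ: ξ = (x, y, t). -/
abbrev Hpt (n : ℕ) : Type := (Fin n → ℝ) × (Fin n → ℝ) × ℝ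

namespace Heis

variable {n : ℕ}

/-- Group multiplication on ℍⁿ. -/
def hmul (ξ η : Hpt n) : Hpt n :=
  (ξ.1 + η.1, ξ.2.1 + η.2.1,
    ξ.2.2 + η.2.2 + 2 * ∑ i, (ξ.1 i * η.2.1 i - ξ.2.1 i * η.1 i))

/-- Group inverse on ℍⁿ. -/
def hinv (ξ : Hpt n) : Hpt n := (-ξ.1, -ξ.2.1, -ξ.2.2)

/-- The gauge (Korányi) quasi-norm N(ξ) = ((|x|²+|y|²)² + t²)^{1/4}. -/
def gaugeN (ξ : Hpt n) : ℝ :=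
  (((∑ i, ξ.1 i ^ 2) + ∑ i, ξ.2.1 i ^ 2) ^ 2 + ξ.2.2 ^ 2) ^ ((1 : ℝ) / 4)

/-- r(ξ) = √(|x|² + |y|²). -/
def rr (ξ : Hpt n) : ℝ := Real.sqrt ((∑ i, ξ.1 i ^ 2) + ∑ i, ξ.2.1 i ^ 2)

/-- The Euclidean inner product on ℝ^{2n+1}. -/
def ip (ν ξ : Hpt n) : ℝ :=
  (∑ i, ν.1 i * ξ.1 i) + (∑ i, ν.2.1 i * ξ.2.1 i) + ν.2.2 * ξ.2.2

/-- X_i u (ξ) = ∂u/∂x_i + 2 y_i ∂u/∂t at ξ. -/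
def XD (u : Hpt n → ℝ) (ξ : Hpt n) (i : Fin n) : ℝ :=
  fderiv ℝ u ξ (Pi.single i 1, 0, 2 * ξ.2.1 i)

/-- Y_i u (ξ) = ∂u/∂y_i − 2 x_i ∂u/∂t at ξ. -/
def YD (u : Hpt n → ℝ) (ξ : Hpt n) (i : Fin n) : ℝ :=
  fderiv ℝ u ξ (0, Pi.single i 1, -(2 * ξ.1 i))

/-- |∇_{ℍⁿ} u|(ξ). -/
def hgradNorm (u : Hpt n → ℝ) (ξ : Hpt n) : ℝ :=
  Real.sqrt (∑ i, (XD u ξ i ^ 2 + YD u ξ i ^ 2))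

/-- ∇_{ℍⁿ}u · ∇_{ℍⁿ}v at ξ. -/
def hdot (u v : Hpt n → ℝ) (ξ : Hpt n) : ℝ :=
  ∑ i, (XD u ξ i * XD v ξ i + YD u ξ i * YD v ξ i)

/-- The horizontal p-Laplacian, pointwise:
Δ_{p,ℍⁿ}d = Σ_i [X_i(|∇_{ℍⁿ}d|^{p−2} X_i d) + Y_i(|∇_{ℍⁿ}d|^{p−2} Y_i d)]. -/
def pLap (p : ℝ) (d : Hpt n → ℝ) (ξ : Hpt n) : ℝ :=
  ∑ i, (XD (fun η => hgradNorm d η ^ (p - 2) * XD d η i) ξ i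
      + YD (fun η => hgradNorm d η ^ (p - 2) * YD d η i) ξ i)

/-- u ∈ C_c^∞(Ω). -/
def IsTest (Ω : Set (Hpt n)) (u : Hpt n → ℝ) : Prop :=
  ContDiff ℝ (⊤ : ℕ∞) u ∧ HasCompactSupport u ∧ tsupport u ⊆ Ω

/-- Gauge pseudodistance of ξ to the set B: inf_{b ∈ B} N(b⁻¹ξ). -/
def distN (B : Set (Hpt n)) (ξ : Hpt n) : ℝ :=
  ⨅ b : B, gaugeN (hmul (hinv (b : Hpt n)) ξ)

/-- Distance of ξ to the set B induced by the quasi-norm ccρ: inf_{b ∈ B} ccρ(b⁻¹ξ). -/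
def distCC (ccρ : Hpt n → ℝ) (B : Set (Hpt n)) (ξ : Hpt n) : ℝ :=
  ⨅ b : B, ccρ (hmul (hinv (b : Hpt n)) ξ)

/-- ξ' is a nearest point of B to ξ for the distance induced by ccρ. -/
def nearestCC (ccρ : Hpt n → ℝ) (B : Set (Hpt n)) (ξ' ξ : Hpt n) : Prop :=
  ξ' ∈ B ∧ ccρ (hmul (hinv ξ') ξ) = distCC ccρ B ξ

/-- Characterization of the Carnot–Carathéodory distance to the origin on ℍⁿ:
ρ(ξ) = (φ/sin φ)·r with φ ∈ [0,π) determined by (2φ−sin 2φ)/(2sin²φ) = |t|/r² when r ≠ 0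
(interpreting φ/sin φ as 1 when t = 0, i.e. φ = 0), and ρ(ξ) = √(π|t|) when r = 0. -/
def IsCCNorm (ccρ : Hpt n → ℝ) : Prop :=
  (∀ ξ : Hpt n, rr ξ = 0 → ccρ ξ = Real.sqrt (π * |ξ.2.2|)) ∧
  (∀ ξ : Hpt n, rr ξ ≠ 0 → ξ.2.2 = 0 → ccρ ξ = rr ξ) ∧
  (∀ ξ : Hpt n, rr ξ ≠ 0 → ξ.2.2 ≠ 0 → ∀ φ : ℝ, 0 < φ → φ < π →
    (2 * φ - Real.sin (2 * φ)) / (2 * Real.sin φ ^ 2) = |ξ.2.2| / rr ξ ^ 2 →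
    ccρ ξ = (φ / Real.sin φ) * rr ξ)

end Heis


namespace Heis

/-! ### Numerical inequalities -/

/-- The only consequence of the definition of `β` that the argument uses. -/
lemma beta_bound (n : ℕ) (hn : 1 ≤ n) (p β : ℝ) (hp : 1 < p)
    (hβ : (p < 2 ∧
        β = max ((2 * (n : ℝ) + p - 2) / (p - 1)) ((2 * (n : ℝ) - p + 1) / (2 * (2 - p)))) ∨
      (p = 2 ∧ β = 2 * (n : ℝ)) ∨
      ((13 + Real.sqrt (32 * (n : ℝ) - 7)) / 8 ≤ p ∧ β = 2 * (n : ℝ) + p - 2) ∨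
      (2 < p ∧ p < (13 + Real.sqrt (32 * (n : ℝ) - 7)) / 8 ∧
        ∃ a : ℝ, 0 < a ∧
          (2 * (n : ℝ) + p - 3) ^ 2 * a ^ 2 +
              4 * ((p - 2) * (2 * (n : ℝ) + p - 3) + (p - 1) * (2 * (n : ℝ) - 1)) * a -
              4 * (2 * p - 3) = 0 ∧
          β = 1 + 1 / a)) :
    1 + 2 * (2 * (n : ℝ) + p - 3) / 3 ≤ β := by
  have hn' : (1 : ℝ) ≤ n := by exact_mod_cast hn
  rcases hβ with ⟨h2, rfl⟩ | ⟨rfl, rfl⟩ | ⟨h, rfl⟩ | ⟨h2, hlt, a, ha, heq, rfl⟩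
  · refine le_trans ?_ (le_max_left _ _)
    rw [le_div_iff₀ (by linarith)]
    nlinarith
  · linarith
  · linarith
  · obtain ⟨q, rfl⟩ : ∃ q, p = 2 + q := ⟨p - 2, by ring⟩
    have hq : 0 < q := by linarith
    -- The bound `p < (13 + √(32n-7))/8` amounts to `4q² + 3q + 1 < 2n` for `q = p - 2`.
    have hs : (8 * q + 3) ^ 2 < 32 * (n : ℝ) - 7 := by
      rw [← Real.lt_sqrt (by linarith)]
      linarith
    set N : ℝ := 2 * (n : ℝ) + (2 + q) - 3 with hN
    have hn2 : 2 * (n : ℝ) - 1 = N - q := by rw [hN]; ring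
    have hNq : 4 * q ^ 2 + 4 * q < N := by nlinarith
    have hN0 : 0 < N := by nlinarith
    rw [hn2] at heq
    suffices hk : 2 * N * a ≤ 3 by
      have : 2 * N / 3 ≤ 1 / a := by
        rw [div_le_div_iff₀ (by norm_num) ha]; linarith
      linarith
    by_contra! hk
    -- The quadratic increases in `a > 0` and is already positive at `a = 3 / (2N)`.
    have h1 : 9 / 4 < N ^ 2 * a ^ 2 := by nlinarith
    have h2 : N * (3 / 2) ≤ N * (N * a) := by
      apply mul_le_mul_of_nonneg_left _ hN0.le; linarith
    have h3 : 0 ≤ (N * a - 3 / 2) * q := mul_nonneg (by linarith) hq.le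
    have h4 : (q + 1) * q * (4 * a) ≤ N * a := by nlinarith
    nlinarith

lemma cube_bound (c ρ R : ℝ) (hc : 0 ≤ c)
    (h : ρ + c ^ ((1 : ℝ) / 3) ≤ R) : c ≤ (R - ρ) ^ 3 := by
  have h0 : 0 ≤ c ^ ((1 : ℝ) / 3) := Real.rpow_nonneg hc _
  have h1 : (c ^ ((1 : ℝ) / 3)) ^ 3 = c := by
    rw [← Real.rpow_natCast, ← Real.rpow_mul hc]; norm_num
  rw [← h1]
  exact pow_le_pow_left₀ h0 (by linarith) 3

/-- The sign of the bracket in the `p`-Laplacian; here `m` stands for `2n - 1`, `a` for `r - R`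
and `s` for the distance to the core circle. -/
lemma torus_poly_nonneg (m p r a t s : ℝ) (hm : 1 ≤ m) (hp : 1 < p) (hr : 0 < r)
    (hs : 0 < s) (hD : s ^ 2 = a ^ 2 + t ^ 2)
    (h1 : m * s ≤ 4 * r ^ 3) (h2 : a < 0 → 2 * (m + p - 2) * s ≤ 3 * r) :
    0 ≤ (p - 1) * a ^ 2 * t ^ 2 * (1 - 4 * r ^ 2) ^ 2 + 4 * r ^ 2 * (a ^ 2 + t ^ 2) ^ 2
      + m * (a / r) * (a ^ 2 + 4 * r ^ 2 * t ^ 2) * (a ^ 2 + t ^ 2)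
      + 4 * (p - 2) * r * a * t ^ 2 * (a ^ 2 + t ^ 2) := by
  have hN : 0 < m + p - 2 := by linarith
  have hfirst : 0 ≤ (p - 1) * a ^ 2 * t ^ 2 * (1 - 4 * r ^ 2) ^ 2 := by
    have : 0 < p - 1 := by linarith
    positivity
  have hrew : m * (a / r) * (a ^ 2 + 4 * r ^ 2 * t ^ 2) * (a ^ 2 + t ^ 2)
      + 4 * (p - 2) * r * a * t ^ 2 * (a ^ 2 + t ^ 2)
      = (a / r) * (a ^ 2 + t ^ 2) * (m * a ^ 2 + 4 * (m + p - 2) * r ^ 2 * t ^ 2) := by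
    field_simp
    ring
  rcases le_or_gt 0 a with ha | ha
  · have : 0 ≤ (a / r) * (a ^ 2 + t ^ 2) * (m * a ^ 2 + 4 * (m + p - 2) * r ^ 2 * t ^ 2) := by
      positivity
    have : 0 ≤ 4 * r ^ 2 * (a ^ 2 + t ^ 2) ^ 2 := by positivity
    linarith
  · obtain ⟨k, rfl⟩ : ∃ k, a = -k := ⟨-a, by ring⟩
    have hk : 0 < k := by linarith
    have h2 := h2 ha
    have e1 : k ^ 3 * (m * s) ≤ k ^ 3 * (4 * r ^ 3) := mul_le_mul_of_nonneg_left h1 (by positivity)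
    have e2 : 2 * r ^ 2 * t ^ 2 * k * (2 * (m + p - 2) * s) ≤ 2 * r ^ 2 * t ^ 2 * k * (3 * r) :=
      mul_le_mul_of_nonneg_left h2 (by positivity)
    have e3 : 0 ≤ 2 * r ^ 3 * ((s - k) ^ 2 * (2 * s + k)) := by positivity
    have ht : t ^ 2 = s ^ 2 - k ^ 2 := by linarith
    have key : 0 ≤ s * (4 * r ^ 3 * s ^ 2 - k * (m * k ^ 2 + 4 * (m + p - 2) * r ^ 2 * t ^ 2)) := by
      rw [ht] at e2 ⊢
      nlinarith
    have key2 := nonneg_of_mul_nonneg_right key hs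
    have : 4 * r ^ 2 * ((-k) ^ 2 + t ^ 2) ^ 2 + (-k / r) * ((-k) ^ 2 + t ^ 2) *
        (m * (-k) ^ 2 + 4 * (m + p - 2) * r ^ 2 * t ^ 2)
        = s ^ 2 / r * (4 * r ^ 3 * s ^ 2 - k * (m * k ^ 2 + 4 * (m + p - 2) * r ^ 2 * t ^ 2)) := by
      rw [← hD]
      field_simp
      ring
    have h5 : 0 ≤ s ^ 2 / r *
        (4 * r ^ 3 * s ^ 2 - k * (m * k ^ 2 + 4 * (m + p - 2) * r ^ 2 * t ^ 2)) := by positivity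
    linarith

/-! ### Horizontal derivatives of functions of `(r, t)` -/

variable {n : ℕ}

lemma rr_sq (η : Hpt n) : rr η ^ 2 = (∑ i, η.1 i ^ 2) + ∑ i, η.2.1 i ^ 2 :=
  Real.sq_sqrt (by positivity)

lemma continuous_rr : Continuous (rr (n := n)) := by
  unfold rr; fun_prop

lemma differentiableAt_rr {η : Hpt n} (h : 0 < rr η) : DifferentiableAt ℝ (rr (n := n)) η := by
  have h0 : ((∑ i, η.1 i ^ 2) + ∑ i, η.2.1 i ^ 2) ≠ 0 := by
    rw [← rr_sq]; positivity
  unfold rr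
  exact DifferentiableAt.sqrt (by fun_prop) h0

lemma fderiv_rr {η : Hpt n} (h : 0 < rr η) (v : Hpt n) :
    fderiv ℝ (rr (n := n)) η v = ((∑ i, η.1 i * v.1 i) + ∑ i, η.2.1 i * v.2.1 i) / rr η := by
  have h1 : HasFDerivAt (fun ζ : Hpt n => rr ζ ^ 2) _ η :=
    (differentiableAt_rr h).hasFDerivAt.pow 2
  have hx : ∀ i : Fin n, HasFDerivAt (fun ζ : Hpt n => ζ.1 i ^ 2) _ η := fun i =>
    (((ContinuousLinearMap.proj (R := ℝ) (φ := fun _ : Fin n => ℝ) i).comp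
      (ContinuousLinearMap.fst ℝ _ _)).hasFDerivAt (x := η)).pow 2
  have hy : ∀ i : Fin n, HasFDerivAt (fun ζ : Hpt n => ζ.2.1 i ^ 2) _ η := fun i =>
    (((ContinuousLinearMap.proj (R := ℝ) (φ := fun _ : Fin n => ℝ) i).comp
      ((ContinuousLinearMap.fst ℝ _ _).comp
        (ContinuousLinearMap.snd ℝ (Fin n → ℝ) ((Fin n → ℝ) × ℝ)))).hasFDerivAt (x := η)).pow 2
  have h2 := (HasFDerivAt.fun_sum (u := Finset.univ) fun i _ => hx i).add
    (HasFDerivAt.fun_sum (u := Finset.univ) fun i _ => hy i)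
  have h3 : (fun ζ : Hpt n => rr ζ ^ 2)
      = (fun ζ : Hpt n => ∑ i, ζ.1 i ^ 2) + fun ζ : Hpt n => ∑ i, ζ.2.1 i ^ 2 := by
    funext ζ; exact rr_sq ζ
  rw [h3] at h1
  have h4 := congrArg (fun L => L v) (h1.unique h2)
  simp [mul_assoc, ← Finset.mul_sum] at h4
  rw [eq_div_iff h.ne']
  linarith

lemma fderiv_radial {h : ℝ × ℝ → ℝ} {η : Hpt n} (hr : 0 < rr η)
    (hh : DifferentiableAt ℝ h (rr η, η.2.2)) (v : Hpt n) :
    fderiv ℝ (fun ζ : Hpt n => h (rr ζ, ζ.2.2)) η v =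
      fderiv ℝ h (rr η, η.2.2) (1, 0) *
        (((∑ i, η.1 i * v.1 i) + ∑ i, η.2.1 i * v.2.1 i) / rr η)
      + fderiv ℝ h (rr η, η.2.2) (0, 1) * v.2.2 := by
  have ht : HasFDerivAt (fun ζ : Hpt n => ζ.2.2)
      ((ContinuousLinearMap.snd ℝ (Fin n → ℝ) ℝ).comp
        (ContinuousLinearMap.snd ℝ (Fin n → ℝ) ((Fin n → ℝ) × ℝ))) η :=
    ((ContinuousLinearMap.snd ℝ (Fin n → ℝ) ℝ).comp
        (ContinuousLinearMap.snd ℝ (Fin n → ℝ) ((Fin n → ℝ) × ℝ))).hasFDerivAt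
  have h1 := (differentiableAt_rr hr).hasFDerivAt.prodMk ht
  have h2 : HasFDerivAt (fun ζ : Hpt n => h (rr ζ, ζ.2.2)) _ η :=
    hh.hasFDerivAt.comp η h1
  rw [h2.fderiv, ← fderiv_rr hr v]
  set c := fderiv ℝ (rr (n := n)) η v with hc
  have h3 : ((c, v.2.2) : ℝ × ℝ) = c • (1, 0) + v.2.2 • (0, 1) := by simp
  simp only [ContinuousLinearMap.comp_apply, ContinuousLinearMap.prod_apply,
    ContinuousLinearMap.coe_snd']
  rw [← hc, h3, map_add, map_smul, map_smul]
  simp [mul_comm]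

lemma differentiableAt_radial {h : ℝ × ℝ → ℝ} {η : Hpt n} (hr : 0 < rr η)
    (hh : DifferentiableAt ℝ h (rr η, η.2.2)) :
    DifferentiableAt ℝ (fun ζ : Hpt n => h (rr ζ, ζ.2.2)) η :=
  DifferentiableAt.comp (f := fun ζ : Hpt n => (rr ζ, ζ.2.2)) η hh
    ((differentiableAt_rr hr).prodMk (by fun_prop))

lemma XD_radial {h : ℝ × ℝ → ℝ} {η : Hpt n} (hr : 0 < rr η)
    (hh : DifferentiableAt ℝ h (rr η, η.2.2)) (i : Fin n) :
    XD (fun ζ : Hpt n => h (rr ζ, ζ.2.2)) η i =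
      fderiv ℝ h (rr η, η.2.2) (1, 0) * (η.1 i / rr η)
      + fderiv ℝ h (rr η, η.2.2) (0, 1) * (2 * η.2.1 i) := by
  rw [XD, fderiv_radial hr hh]
  simp [Pi.single_apply]

lemma YD_radial {h : ℝ × ℝ → ℝ} {η : Hpt n} (hr : 0 < rr η)
    (hh : DifferentiableAt ℝ h (rr η, η.2.2)) (i : Fin n) :
    YD (fun ζ : Hpt n => h (rr ζ, ζ.2.2)) η i =
      fderiv ℝ h (rr η, η.2.2) (1, 0) * (η.2.1 i / rr η)
      - fderiv ℝ h (rr η, η.2.2) (0, 1) * (2 * η.1 i) := by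
  rw [YD, fderiv_radial hr hh]
  simp [Pi.single_apply]
  ring

/-- Horizontal divergence of a field with components `A x_i + B y_i` and `A y_i - B x_i`. -/
lemma hdiv_radial {A B : ℝ × ℝ → ℝ} {ξ : Hpt n} (hr : 0 < rr ξ)
    (hA : DifferentiableAt ℝ A (rr ξ, ξ.2.2)) (hB : DifferentiableAt ℝ B (rr ξ, ξ.2.2)) :
    ∑ i, (XD (fun η : Hpt n => A (rr η, η.2.2) * η.1 i + B (rr η, η.2.2) * η.2.1 i) ξ i
      + YD (fun η : Hpt n => A (rr η, η.2.2) * η.2.1 i - B (rr η, η.2.2) * η.1 i) ξ i)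
    = 2 * n * A (rr ξ, ξ.2.2) + rr ξ * fderiv ℝ A (rr ξ, ξ.2.2) (1, 0)
      + 2 * rr ξ ^ 2 * fderiv ℝ B (rr ξ, ξ.2.2) (0, 1) := by
  have dA := (differentiableAt_radial hr hA).hasFDerivAt
  have dB := (differentiableAt_radial hr hB).hasFDerivAt
  have hx : ∀ i : Fin n, HasFDerivAt (fun ζ : Hpt n => ζ.1 i) _ ξ := fun i =>
    (((ContinuousLinearMap.proj (R := ℝ) (φ := fun _ : Fin n => ℝ) i).comp
      (ContinuousLinearMap.fst ℝ _ _)).hasFDerivAt (x := ξ))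
  have hy : ∀ i : Fin n, HasFDerivAt (fun ζ : Hpt n => ζ.2.1 i) _ ξ := fun i =>
    (((ContinuousLinearMap.proj (R := ℝ) (φ := fun _ : Fin n => ℝ) i).comp
      ((ContinuousLinearMap.fst ℝ _ _).comp
        (ContinuousLinearMap.snd ℝ (Fin n → ℝ) ((Fin n → ℝ) × ℝ)))).hasFDerivAt (x := ξ))
  have key : ∀ i : Fin n,
      XD (fun η : Hpt n => A (rr η, η.2.2) * η.1 i + B (rr η, η.2.2) * η.2.1 i) ξ i
      + YD (fun η : Hpt n => A (rr η, η.2.2) * η.2.1 i - B (rr η, η.2.2) * η.1 i) ξ i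
      = 2 * A (rr ξ, ξ.2.2)
        + (fderiv ℝ A (rr ξ, ξ.2.2) (1, 0) / rr ξ + 2 * fderiv ℝ B (rr ξ, ξ.2.2) (0, 1)) *
          (ξ.1 i ^ 2 + ξ.2.1 i ^ 2) := by
    intro i
    have e1 := ((dA.mul (hx i)).add (dB.mul (hy i))).fderiv
    have e2 := ((dA.mul (hy i)).sub (dB.mul (hx i))).fderiv
    have a1 := XD_radial hr hA i
    have a2 := YD_radial hr hA i
    have b1 := XD_radial hr hB i
    have b2 := YD_radial hr hB i
    simp only [XD, YD] at a1 a2 b1 b2 ⊢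
    have f1 := congrArg (fun L => L (Pi.single i 1, 0, 2 * ξ.2.1 i)) e1
    have f2 := congrArg (fun L => L (0, Pi.single i 1, -(2 * ξ.1 i))) e2
    simp only [_root_.add_apply, _root_.sub_apply,
      _root_.smul_apply, a1, a2, b1, b2] at f1 f2
    refine (congrArg₂ (· + ·) f1 f2).trans ?_
    simp
    field_simp
    ring
  rw [Finset.sum_congr rfl fun i _ => key i, Finset.sum_add_distrib, ← Finset.mul_sum,
    ← Finset.mul_sum, Finset.sum_add_distrib, ← rr_sq]
  simp
  field_simp
  ring

/-! ### The distance to the boundary of the torus -/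

/-- The factor `|∇d|^{p-2} / s`, where `s = √((r-R)² + t²)`, as a function of `(r, t)`. -/
def torusK (p R : ℝ) (z : ℝ × ℝ) : ℝ :=
  ((z.1 - R) ^ 2 + 4 * z.1 ^ 2 * z.2 ^ 2) ^ ((p - 2) / 2) *
    ((z.1 - R) ^ 2 + z.2 ^ 2) ^ (-((p - 2) / 2) - 1 / 2)

/-- The radial coefficient `|∇d|^{p-2} d_r / r`. -/
def torusA (p R : ℝ) (z : ℝ × ℝ) : ℝ := -(z.1 - R) * torusK p R z / z.1

/-- The angular coefficient `2 |∇d|^{p-2} d_t`. -/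
def torusB (p R : ℝ) (z : ℝ × ℝ) : ℝ := -2 * z.2 * torusK p R z

lemma fderiv_dist {R ρ : ℝ} {z : ℝ × ℝ} (hD : 0 < (z.1 - R) ^ 2 + z.2 ^ 2) (v : ℝ × ℝ) :
    DifferentiableAt ℝ (fun z : ℝ × ℝ => ρ - √((z.1 - R) ^ 2 + z.2 ^ 2)) z ∧
    fderiv ℝ (fun z : ℝ × ℝ => ρ - √((z.1 - R) ^ 2 + z.2 ^ 2)) z v =
      -((z.1 - R) * v.1 + z.2 * v.2) / √((z.1 - R) ^ 2 + z.2 ^ 2) := by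
  have h1 : HasFDerivAt (fun z : ℝ × ℝ => z.1) (ContinuousLinearMap.fst ℝ ℝ ℝ) z :=
    hasFDerivAt_fst
  have h2 : HasFDerivAt (fun z : ℝ × ℝ => z.2) (ContinuousLinearMap.snd ℝ ℝ ℝ) z :=
    hasFDerivAt_snd
  have h3 := ((((h1.sub_const R).pow 2).add (h2.pow 2)).sqrt hD.ne').const_sub ρ
  refine ⟨h3.differentiableAt, ?_⟩
  refine (congrArg (fun L => L v) h3.fderiv).trans ?_
  have : √((z.1 - R) ^ 2 + z.2 ^ 2) ≠ 0 := (Real.sqrt_pos.2 hD).ne'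
  simp
  field_simp

lemma hgradNorm_rpow {R ρ p : ℝ} {η : Hpt n} (hr : 0 < rr η)
    (hD : 0 < (rr η - R) ^ 2 + η.2.2 ^ 2) :
    hgradNorm (fun η : Hpt n => ρ - √((rr η - R) ^ 2 + η.2.2 ^ 2)) η ^ (p - 2)
      = torusK p R (rr η, η.2.2) * √((rr η - R) ^ 2 + η.2.2 ^ 2) := by
  have hd := fun v => fderiv_dist (ρ := ρ) (z := (rr η, η.2.2)) hD v
  have hX := XD_radial hr (hd 0).1
  have hY := YD_radial hr (hd 0).1
  simp only [(hd _).2] at hX hY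
  set D := (rr η - R) ^ 2 + η.2.2 ^ 2 with hDdef
  have hs : √D ^ 2 = D := Real.sq_sqrt hD.le
  have hs0 : 0 < √D := Real.sqrt_pos.2 hD
  have hW : ∑ i, (XD (fun η : Hpt n => ρ - √((rr η - R) ^ 2 + η.2.2 ^ 2)) η i ^ 2 +
      YD (fun η : Hpt n => ρ - √((rr η - R) ^ 2 + η.2.2 ^ 2)) η i ^ 2)
      = ((rr η - R) ^ 2 + 4 * rr η ^ 2 * η.2.2 ^ 2) / D := by
    have : ∀ i, XD (fun η : Hpt n => ρ - √((rr η - R) ^ 2 + η.2.2 ^ 2)) η i ^ 2 +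
      YD (fun η : Hpt n => ρ - √((rr η - R) ^ 2 + η.2.2 ^ 2)) η i ^ 2
      = (((rr η - R) ^ 2 + 4 * rr η ^ 2 * η.2.2 ^ 2) / D / rr η ^ 2)
        * (η.1 i ^ 2 + η.2.1 i ^ 2) := by
      intro i
      rw [hX, hY]
      field_simp
      rw [hs]
      field_simp
      ring
    rw [Finset.sum_congr rfl fun i _ => this i, ← Finset.mul_sum, Finset.sum_add_distrib, ← rr_sq]
    field_simp
  have hM : 0 ≤ (rr η - R) ^ 2 + 4 * rr η ^ 2 * η.2.2 ^ 2 := by positivity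
  rw [hgradNorm, hW, Real.sqrt_eq_rpow, ← Real.rpow_mul (by positivity), torusK]
  simp only [← hDdef]
  rw [Real.div_rpow hM hD.le, Real.sqrt_eq_rpow,
    mul_assoc (_ ^ ((p - 2) / 2)), ← Real.rpow_add hD, div_eq_mul_inv,
    ← Real.rpow_neg hD.le]
  congr 2 <;> ring

/-- The `p`-Laplacian of `d` in terms of derivatives in `(r, t)`. -/
lemma pLap_torus_eq {R ρ p : ℝ} {ξ : Hpt n} (hr : 0 < rr ξ)
    (hD : 0 < (rr ξ - R) ^ 2 + ξ.2.2 ^ 2)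
    (hA : DifferentiableAt ℝ (torusA p R) (rr ξ, ξ.2.2))
    (hB : DifferentiableAt ℝ (torusB p R) (rr ξ, ξ.2.2)) :
    pLap p (fun η => ρ - √((rr η - R) ^ 2 + η.2.2 ^ 2)) ξ
    = 2 * n * torusA p R (rr ξ, ξ.2.2) + rr ξ * fderiv ℝ (torusA p R) (rr ξ, ξ.2.2) (1, 0)
      + 2 * rr ξ ^ 2 * fderiv ℝ (torusB p R) (rr ξ, ξ.2.2) (0, 1) := by
  have hc := continuous_rr (n := n)
  have ev1 : ∀ᶠ η : Hpt n in nhds ξ, 0 < rr η :=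
    hc.continuousAt.eventually (lt_mem_nhds hr)
  have ev2 : ∀ᶠ η : Hpt n in nhds ξ, 0 < (rr η - R) ^ 2 + η.2.2 ^ 2 :=
    (show Continuous fun η : Hpt n => (rr η - R) ^ 2 + η.2.2 ^ 2 by fun_prop).continuousAt.eventually
      (lt_mem_nhds hD)
  rw [← hdiv_radial hr hA hB, pLap]
  refine Finset.sum_congr rfl fun i _ => congrArg₂ (· + ·) ?_ ?_
  · unfold XD
    refine DFunLike.congr_fun (Filter.EventuallyEq.fderiv_eq ?_) _
    filter_upwards [ev1, ev2] with η h1 h2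
    have hd := fun v => fderiv_dist (ρ := ρ) (z := (rr η, η.2.2)) h2 v
    have hX := XD_radial h1 (hd 0).1 i
    simp only [(hd _).2, XD] at hX
    have hs0 := Real.sqrt_pos.2 h2
    rw [hX, hgradNorm_rpow h1 h2, torusA, torusB]
    field_simp
    ring
  · unfold YD
    refine DFunLike.congr_fun (Filter.EventuallyEq.fderiv_eq ?_) _
    filter_upwards [ev1, ev2] with η h1 h2
    have hd := fun v => fderiv_dist (ρ := ρ) (z := (rr η, η.2.2)) h2 v
    have hY := YD_radial h1 (hd 0).1 i
    simp only [(hd _).2, YD] at hY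
    have hs0 := Real.sqrt_pos.2 h2
    rw [hY, hgradNorm_rpow h1 h2, torusA, torusB]
    field_simp
    ring

/-- Logarithmic differentiation of `torusK`. -/
lemma hasFDerivAt_torusK {p R : ℝ} {z : ℝ × ℝ}
    (hM : 0 < (z.1 - R) ^ 2 + 4 * z.1 ^ 2 * z.2 ^ 2) (hD : 0 < (z.1 - R) ^ 2 + z.2 ^ 2) :
    DifferentiableAt ℝ (torusK p R) z ∧ ∀ v : ℝ × ℝ, fderiv ℝ (torusK p R) z v =
      torusK p R z *
        ((p - 2) * ((z.1 - R) * v.1 + 4 * z.1 * z.2 ^ 2 * v.1 + 4 * z.1 ^ 2 * z.2 * v.2) /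
            ((z.1 - R) ^ 2 + 4 * z.1 ^ 2 * z.2 ^ 2)
          - (p - 1) * ((z.1 - R) * v.1 + z.2 * v.2) / ((z.1 - R) ^ 2 + z.2 ^ 2)) := by
  have h1 : HasFDerivAt (fun z : ℝ × ℝ => z.1) (ContinuousLinearMap.fst ℝ ℝ ℝ) z :=
    hasFDerivAt_fst
  have h2 : HasFDerivAt (fun z : ℝ × ℝ => z.2) (ContinuousLinearMap.snd ℝ ℝ ℝ) z :=
    hasFDerivAt_snd
  have hM' := ((h1.sub_const R).pow 2).add (((h1.pow 2).const_mul 4).mul (h2.pow 2))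
  have hD' := ((h1.sub_const R).pow 2).add (h2.pow 2)
  have h3 := (hM'.rpow_const (p := (p - 2) / 2) (Or.inl hM.ne')).mul
    (hD'.rpow_const (p := -((p - 2) / 2) - 1 / 2) (Or.inl hD.ne'))
  refine ⟨h3.differentiableAt, fun v => ?_⟩
  refine (congrArg (fun L => L v) h3.fderiv).trans ?_
  simp [torusK, Real.rpow_sub_one hM.ne', Real.rpow_sub_one hD.ne']
  field_simp
  ring

lemma torus_identity {p R m r t : ℝ} (hr : 0 < r)
    (hM : 0 < (r - R) ^ 2 + 4 * r ^ 2 * t ^ 2) (hD : 0 < (r - R) ^ 2 + t ^ 2) :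
    DifferentiableAt ℝ (torusA p R) (r, t) ∧ DifferentiableAt ℝ (torusB p R) (r, t) ∧
    (m + 1) * torusA p R (r, t) + r * fderiv ℝ (torusA p R) (r, t) (1, 0)
      + 2 * r ^ 2 * fderiv ℝ (torusB p R) (r, t) (0, 1)
    = -(torusK p R (r, t) / (((r - R) ^ 2 + 4 * r ^ 2 * t ^ 2) * ((r - R) ^ 2 + t ^ 2))) *
      ((p - 1) * (r - R) ^ 2 * t ^ 2 * (1 - 4 * r ^ 2) ^ 2
        + 4 * r ^ 2 * ((r - R) ^ 2 + t ^ 2) ^ 2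
        + m * ((r - R) / r) * ((r - R) ^ 2 + 4 * r ^ 2 * t ^ 2) * ((r - R) ^ 2 + t ^ 2)
        + 4 * (p - 2) * r * (r - R) * t ^ 2 * ((r - R) ^ 2 + t ^ 2)) := by
  obtain ⟨hK, hK'⟩ := hasFDerivAt_torusK (p := p) (z := (r, t)) hM hD
  have h1 : HasFDerivAt (fun z : ℝ × ℝ => z.1) (ContinuousLinearMap.fst ℝ ℝ ℝ) (r, t) :=
    hasFDerivAt_fst
  have h2 : HasFDerivAt (fun z : ℝ × ℝ => z.2) (ContinuousLinearMap.snd ℝ ℝ ℝ) (r, t) :=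
    hasFDerivAt_snd
  have hinv : HasFDerivAt (fun z : ℝ × ℝ => z.1⁻¹) _ (r, t) :=
    (hasDerivAt_inv hr.ne').comp_hasFDerivAt (r, t) h1
  have hA0 := (((h1.sub_const R).neg.mul hK.hasFDerivAt).mul hinv)
  have hA : HasFDerivAt (torusA p R) _ (r, t) := hA0
  have hB0 := ((h2.const_mul (-2)).mul hK.hasFDerivAt)
  have hB : HasFDerivAt (torusB p R) _ (r, t) := hB0
  refine ⟨hA.differentiableAt, hB.differentiableAt, ?_⟩
  rw [hA.fderiv, hB.fderiv]
  dsimp only at hK'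
  obtain ⟨M, hMdef⟩ : ∃ M, M = (r - R) ^ 2 + 4 * r ^ 2 * t ^ 2 := ⟨_, rfl⟩
  obtain ⟨D, hDdef⟩ : ∃ D, D = (r - R) ^ 2 + t ^ 2 := ⟨_, rfl⟩
  rw [← hMdef] at hM hK' ⊢
  rw [← hDdef] at hD hK' ⊢
  simp [hK', torusA]
  field_simp
  rw [hMdef, hDdef]
  ring

end Heis

open Heis in
/-- pointwise p-superharmonicity of the Euclidean distance to the boundary of
the torus T on T ∖ S, under the conditions R ≥ ρ + ((2n−1)ρ/4)^{1/3} and R ≥ β(p,n)ρ. -/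
theorem torus_pointwise_superharmonic (n : ℕ) (hn : 1 ≤ n) (p R ρ : ℝ) (hp : 1 < p)
    (hρ : 0 < ρ) (hRρ : ρ < R) (β : ℝ)
    (hβ : (p < 2 ∧
        β = max ((2 * (n : ℝ) + p - 2) / (p - 1)) ((2 * (n : ℝ) - p + 1) / (2 * (2 - p)))) ∨
      (p = 2 ∧ β = 2 * (n : ℝ)) ∨
      ((13 + Real.sqrt (32 * (n : ℝ) - 7)) / 8 ≤ p ∧ β = 2 * (n : ℝ) + p - 2) ∨
      (2 < p ∧ p < (13 + Real.sqrt (32 * (n : ℝ) - 7)) / 8 ∧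
        ∃ a : ℝ, 0 < a ∧
          (2 * (n : ℝ) + p - 3) ^ 2 * a ^ 2 +
              4 * ((p - 2) * (2 * (n : ℝ) + p - 3) + (p - 1) * (2 * (n : ℝ) - 1)) * a -
              4 * (2 * p - 3) = 0 ∧
          β = 1 + 1 / a))
    (hR1 : ρ + ((2 * (n : ℝ) - 1) * ρ / 4) ^ ((1 : ℝ) / 3) ≤ R) (hR2 : β * ρ ≤ R) :
    ∀ ξ : Hpt n, (rr ξ - R) ^ 2 + ξ.2.2 ^ 2 < ρ ^ 2 → ¬(ξ.2.2 = 0 ∧ rr ξ = R) →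
      pLap p (fun η => ρ - Real.sqrt ((rr η - R) ^ 2 + η.2.2 ^ 2)) ξ ≤ 0 := by
  intro ξ hξ hS
  have hn' : (1 : ℝ) ≤ n := by exact_mod_cast hn
  have hb := beta_bound n hn p β hp hβ
  have hc := cube_bound _ ρ R (by have : 0 ≤ 2 * (n : ℝ) - 1 := by linarith
                                  positivity) hR1
  obtain ⟨r, hrdef⟩ : ∃ r, r = rr ξ := ⟨_, rfl⟩
  obtain ⟨t, htdef⟩ : ∃ t, t = ξ.2.2 := ⟨_, rfl⟩
  rw [← hrdef, ← htdef] at hξ hS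
  have hD : 0 < (r - R) ^ 2 + t ^ 2 := by
    by_contra! h
    have h1 : t ^ 2 = 0 := le_antisymm (by nlinarith [sq_nonneg (r - R)]) (sq_nonneg t)
    have h2 : (r - R) ^ 2 = 0 := le_antisymm (by nlinarith [sq_nonneg t]) (sq_nonneg _)
    exact hS ⟨by simpa using h1, sub_eq_zero.1 (by simpa using h2)⟩
  have hrR : R - ρ < r := by
    have : |r - R| < ρ := abs_lt_of_sq_lt_sq (by nlinarith [sq_nonneg t]) hρ.le
    linarith [(abs_lt.1 this).1]
  have hr : 0 < r := by linarith
  have hM : 0 < (r - R) ^ 2 + 4 * r ^ 2 * t ^ 2 := by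
    rcases eq_or_ne t 0 with h0 | h0
    · rw [h0] at hD ⊢
      linarith
    · positivity
  set s := √((r - R) ^ 2 + t ^ 2) with hsdef
  have hs0 : 0 < s := Real.sqrt_pos.2 hD
  have hs2 : s ^ 2 = (r - R) ^ 2 + t ^ 2 := Real.sq_sqrt hD.le
  have hsρ : s < ρ := lt_of_pow_lt_pow_left₀ 2 hρ.le (by rw [hs2]; exact hξ)
  have hRs : -s ≤ r - R := (abs_le.1 (abs_le_of_sq_le_sq (by nlinarith [sq_nonneg t]) hs0.le)).1
  have hpoly := torus_poly_nonneg (2 * n - 1) p r (r - R) t s (by linarith) hp hr hs0 hs2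
    (by
      have h1 : (R - ρ) ^ 3 ≤ r ^ 3 := pow_le_pow_left₀ (by linarith) hrR.le 3
      have h2 : (2 * (n : ℝ) - 1) * s ≤ (2 * (n : ℝ) - 1) * ρ :=
        mul_le_mul_of_nonneg_left hsρ.le (by linarith)
      linarith)
    (by
      intro _
      have h1 : (1 + 2 * (2 * (n : ℝ) + p - 3) / 3) * ρ ≤ β * ρ :=
        mul_le_mul_of_nonneg_right hb hρ.le
      have h2 : (1 + 2 * (2 * (n : ℝ) + p - 3) / 3) * s ≤
          (1 + 2 * (2 * (n : ℝ) + p - 3) / 3) * ρ :=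
        mul_le_mul_of_nonneg_left hsρ.le (by linarith)
      linarith)
  obtain ⟨hA, hB, hid⟩ := torus_identity (p := p) (m := 2 * n - 1) hr hM hD
  have hK : 0 ≤ torusK p R (r, t) := mul_nonneg (Real.rpow_nonneg hM.le _) (Real.rpow_nonneg hD.le _)
  rw [sub_add_cancel] at hid
  rw [hrdef, htdef] at hA hB
  rw [pLap_torus_eq (hrdef ▸ hr) (by rw [← hrdef, ← htdef]; exact hD) hA hB, ← hrdef, ← htdef, hid,
    neg_mul]
  exact neg_nonpos.2 (mul_nonneg (div_nonneg hK (mul_pos hM hD).le) hpoly)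
end
end

section
/- Let p > 1, let R > ρ > 0, and let T, S, d and β(p,n) be as follows: T = {(x,y,t) ∈ ℍⁿ : (r−R)² + t² < ρ²} with r = √(|x|²+|y|²), S = {(x,y,t) : t = 0, r = R}, d(ξ) = ρ − √((r−R)² + t²), and β(p,n) = max{ (2n+p−2)/(p−1), (2n−p+1)/(2(2−p)) } if 1 < p < 2; β(p,n) = 2n if p = 2; β(p,n) = 2n+p−2 if p ≥ (13+√(32n−7))/8; β(p,n) = 1 + 1/a(p,n) if 2 < p < (13+√(32n−7))/8, where a(p,n) is the unique positive root of (2n+p−3)² a² + 4( (p−2)(2n+p−3) + (p−1)(2n−1) ) a − 4(2p−3) = 0. Assume R ≥ ρ + ((2n−1)ρ/4)^{1/3} and R ≥ β(p,n) ρ. Then: (i) ∫_T |∇_{ℍⁿ}d|^{p−2} ∇_{ℍⁿ}d · ∇_{ℍⁿ}φ dξ ≥ 0 for every nonnegative φ ∈ C_c^∞(T); and (ii) for every u ∈ C_c^∞(T), ∫_T |∇_{ℍⁿ}u|^p dξ ≥ ((p−1)/p)^p ∫_T (|∇_{ℍⁿ}d|^p / d^p) |u|^p dξ. -/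
/-!
Let `δ` be the Euclidean distance to the core `{r = R, t = 0}`, so that `d = ρ - δ` on the torus.

**Superharmonicity off the core.** Since `δ` depends on `(r, t)` only, the field
`|∇δ|^(p-2) ∇δ` has the form `A (x, y) + B (y, -x)` with `A`, `B` functions of `(r, t)`, and its
horizontal divergence is `2 n A + r ∂_r A + 2 r² ∂_t B` (`divergence_polar`). Computed in closed form
(`coef_divergence`), it is a positive factor times an explicit expression, which is nonnegative
under the restrictions on `R` and `ρ` (`lap_numerator_nonneg`, with `radius_bounds` extracting the
needed bounds from the definition of `β`). Hence `-Δ_p d ≥ 0` wherever `0 < d < ρ`.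

**Crossing the core.** Integration by parts is available for test functions supported away from the
core, such as `cut(d) φ`, where `cut(d)` vanishes near `{d = ρ}`. The cutoff is nonincreasing in `d`,
so the term with its derivative has a favourable sign and can be dropped (`exists_le_cut_mul`):
`cut(d) |∇d|^(p-2) ∇d · ∇φ` has nonnegative integral. Letting the cutoff tend to `1`, by dominated
convergence, gives (i). No information about the measure of the core is needed, because the
derivative of `d` (or its junk value) vanishes there: `d` attains its maximum on the core.

**Hardy inequality.** For (ii), the test function is `φ = |u|^p d^(1-p)`. By Young's inequality,
`((p-1)/p)^(p-1) |∇d|^(p-2) ∇d · ∇φ ≤ |∇u|^p - ((p-1)/p)^p |∇d|^p |u|^p / d^p` pointwise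
(`hardy_pointwise`); multiplying by the cutoff, integrating, and removing the cutoff concludes.
-/

open MeasureTheory Real Set Filter

noncomputable section

namespace TorusHardy

/-! ### The sign of the `p`-Laplacian numerator -/

/-- The sign condition on the inner half `r < R` of the torus, in the normalized variables
`σ = |r - R| / δ`, `E = δ / r`, `m = 4 r²`, where `δ² = (r - R)² + t²` and hence
`t² = (1 - σ²) δ²`. This is where all three restrictions on the radii are needed. -/
lemma norm_ineq_neg {k p E m σ : ℝ} (hk : 0 ≤ k) (hp : 1 < p) (hE : 0 < E) (hm : 0 < m)
    (hσ0 : 0 ≤ σ) (hσ1 : σ ≤ 1) (h1 : k * E ≤ m) (h2 : p < 2 → k * E ≤ p - 1)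
    (h3 : 2 ≤ p → (k + p - 2) * E ≤ 1) :
    0 ≤ ((1 - σ ^ 2) + m * σ ^ 2 - k * σ * E) * (σ ^ 2 + m * (1 - σ ^ 2)) +
      (p - 2) * (1 - σ ^ 2) * (σ ^ 2 * (m - 1) ^ 2 - m * σ * E) := by
  obtain ⟨s, hs⟩ : ∃ s, s = 1 - σ ^ 2 := ⟨_, rfl⟩
  have hs0 : 0 ≤ s := by nlinarith
  obtain ⟨W, hW⟩ : ∃ W, W = σ ^ 2 + m * s := ⟨_, rfl⟩
  have hms : 0 ≤ m * s := by positivity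
  have hσ2 : 0 ≤ σ ^ 2 := by positivity
  have hW0 : 0 ≤ W := by rw [hW]; positivity
  have hkE : 0 ≤ k * E := by positivity
  have hmsE : 0 ≤ s * (m * (σ * E)) := by positivity
  rw [← hs, ← hW]
  rcases lt_or_ge p 2 with hp2 | hp2
  · have h2 := h2 hp2
    have key : (s + m * σ ^ 2 - k * σ * E) * W + (p - 2) * s * (σ ^ 2 * (m - 1) ^ 2 - m * σ * E)
        = (p - 1) * ((s + m * σ ^ 2) * W) + (2 - p) * (m + s * (m * (σ * E))) - σ * (k * E) * W := by
      rw [hW, hs]; ring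
    rw [key]
    -- Only `k E σ W` is negative. It is absorbed by the `p - 1` term if `m ≥ 1` (as `k E ≤ p - 1`),
    -- and by the `p - 1` and `2 - p` terms together if `m < 1` (as `k E ≤ m` and `W ≤ 1`).
    have hz : 0 ≤ (2 - p) * (s * (m * (σ * E))) := mul_nonneg (by linarith) hmsE
    rcases le_or_gt 1 m with hm1 | hm1
    · have e1 : 1 ≤ s + m * σ ^ 2 := by nlinarith
      have e2 : W ≤ (s + m * σ ^ 2) * W := by nlinarith
      have e3 : σ * (k * E) ≤ p - 1 := by nlinarith
      have e4 := mul_le_mul_of_nonneg_right e3 hW0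
      have e5 := mul_le_mul_of_nonneg_left e2 (by linarith : 0 ≤ p - 1)
      have : 0 ≤ (2 - p) * m := mul_nonneg (by linarith) hm.le
      nlinarith
    · have e1 : m ≤ s + m * σ ^ 2 := by nlinarith
      have e2 : m * W ≤ (s + m * σ ^ 2) * W := mul_le_mul_of_nonneg_right e1 hW0
      have e3 : σ * (k * E) ≤ m := by nlinarith
      have e4 := mul_le_mul_of_nonneg_right e3 hW0
      have e5 := mul_le_mul_of_nonneg_left e2 (by linarith : 0 ≤ p - 1)
      have hW1 : W ≤ 1 := by nlinarith
      have : (2 - p) * (m * W) ≤ (2 - p) * m := by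
        apply mul_le_mul_of_nonneg_left _ (by linarith); nlinarith
      nlinarith
  · have h3 := h3 hp2
    have hB : 0 ≤ (p - 2) * E := mul_nonneg (by linarith) hE.le
    have hsq : 0 ≤ (p - 2) * (s * (σ ^ 2 * (m - 1) ^ 2)) := mul_nonneg (by linarith) (by positivity)
    obtain ⟨A, hA⟩ : ∃ A, A = k * E := ⟨_, rfl⟩
    obtain ⟨B, hB'⟩ : ∃ B, B = (p - 2) * E := ⟨_, rfl⟩
    have hAB : A + B ≤ 1 := by rw [hA, hB']; linarith
    have key : (s + m * σ ^ 2 - k * σ * E) * W + (p - 2) * s * (σ ^ 2 * (m - 1) ^ 2 - m * σ * E)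
        = (s + m * σ ^ 2 - A * σ) * W - B * (m * s) * σ
          + (p - 2) * (s * (σ ^ 2 * (m - 1) ^ 2)) := by
      rw [hA, hB']; ring
    rw [key]
    rw [← hA] at h1 hkE
    rw [← hB'] at hB
    -- The negative terms are `A σ W` and `B m s σ`. For `m ≥ 1`, use `m s ≤ W` and `A + B ≤ 1`. For
    -- `m < 1`, replace `B` by `1 - A`, then `A` by its upper bound `m`.
    have hBle : B * (m * s * σ) ≤ (1 - A) * (m * s * σ) :=
      mul_le_mul_of_nonneg_right (by linarith) (by positivity)
    rcases le_or_gt 1 m with hm1 | hm1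
    · have e1 : 1 ≤ s + m * σ ^ 2 := by nlinarith
      have e2 : W ≤ (s + m * σ ^ 2) * W := by nlinarith
      have e3 : m * s ≤ W := by rw [hW]; linarith
      have e4 : B * σ * (m * s) ≤ B * σ * W := mul_le_mul_of_nonneg_left e3 (by positivity)
      have e5 : (A + B) * (σ * W) ≤ 1 * (σ * W) := mul_le_mul_of_nonneg_right hAB (by positivity)
      have e6 : σ * W ≤ 1 * W := mul_le_mul_of_nonneg_right hσ1 hW0
      nlinarith
    · have e1 : (s + m * σ ^ 2 - A * σ) * W - (1 - A) * (m * s * σ)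
          = (s + m * σ ^ 2) * W - m * s * σ - A * σ ^ 3 := by rw [hW]; ring
      have e2 : A * σ ^ 3 ≤ m * σ ^ 3 := mul_le_mul_of_nonneg_right h1 (by positivity)
      have e3 : (s + m * σ ^ 2) * W - m * s * σ - m * σ ^ 3
          = (1 - σ) * (m + (1 - m) * ((1 - m) * σ ^ 2) + (1 - m) ^ 2 * σ ^ 3) := by
        rw [hW, hs]; ring
      have e4 : 0 ≤ (1 - σ) * (m + (1 - m) * ((1 - m) * σ ^ 2) + (1 - m) ^ 2 * σ ^ 3) := by
        have : 0 ≤ 1 - m := by linarith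
        have : 0 ≤ 1 - σ := by linarith
        positivity
      nlinarith

/-- The sign condition on the outer half `r ≥ R`, in the same variables as `norm_ineq_neg`; here
`δ ≤ r` suffices. -/
lemma norm_ineq_pos {k p E m σ : ℝ} (hk : 0 ≤ k) (hp : 1 < p) (hE : 0 < E) (hm : 0 < m)
    (hσ0 : 0 ≤ σ) (hσ1 : σ ≤ 1) (h1 : E ≤ 1) :
    0 ≤ ((1 - σ ^ 2) + m * σ ^ 2 + k * σ * E) * (σ ^ 2 + m * (1 - σ ^ 2)) +
      (p - 2) * (1 - σ ^ 2) * (σ ^ 2 * (m - 1) ^ 2 + m * σ * E) := by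
  obtain ⟨s, hs⟩ : ∃ s, s = 1 - σ ^ 2 := ⟨_, rfl⟩
  have hs0 : 0 ≤ s := by nlinarith
  have hs1 : s ≤ 1 := by nlinarith
  rw [← hs]
  rcases lt_or_ge p 2 with hp2 | hp2
  · have key : (s + m * σ ^ 2 + k * σ * E) * (σ ^ 2 + m * s) +
        (p - 2) * s * (σ ^ 2 * (m - 1) ^ 2 + m * σ * E)
        = (p - 1) * ((s + m * σ ^ 2) * (σ ^ 2 + m * s)) + (2 - p) * (m * (1 - s * σ * E)) +
          k * σ * E * (σ ^ 2 + m * s) := by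
      rw [hs]; ring
    rw [key]
    have : s * σ * E ≤ 1 := mul_le_one₀ (mul_le_one₀ hs1 hσ0 hσ1) hE.le h1
    have e1 : 0 ≤ p - 1 := by linarith
    have e2 : 0 ≤ 2 - p := by linarith
    have e3 : 0 ≤ 1 - s * σ * E := by linarith
    positivity
  · have : 0 ≤ p - 2 := by linarith
    positivity

/-- With `δ = √((r - R)² + t²)` and `k = 2n - 1`, the right-hand side is `δ³ |∇δ|^(2-p)` times the
horizontal `p`-Laplacian of `δ` (see `coef_divergence`). -/
lemma lap_numerator_nonneg {k p R ρ r t : ℝ} (hk : 0 ≤ k) (hp : 1 < p) (hρ : 0 < ρ) (hRρ : ρ < R)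
    (h1 : k * ρ / 4 ≤ (R - ρ) ^ 3) (h2 : p < 2 → k * ρ ≤ (p - 1) * (R - ρ))
    (h3 : 2 ≤ p → (k + p - 2) * ρ ≤ R - ρ)
    (h0 : 0 < (r - R) ^ 2 + t ^ 2) (hlt : (r - R) ^ 2 + t ^ 2 < ρ ^ 2) :
    0 ≤ t ^ 2 + 4 * r ^ 2 * (r - R) ^ 2 + k * (r - R) * ((r - R) ^ 2 + t ^ 2) / r +
      (p - 2) * (t ^ 2 / ((r - R) ^ 2 + 4 * r ^ 2 * t ^ 2)) *
        ((r - R) ^ 2 * (4 * r ^ 2 - 1) ^ 2 + 4 * r * (r - R) * ((r - R) ^ 2 + t ^ 2)) := by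
  obtain ⟨D, hD⟩ : ∃ D, D = √((r - R) ^ 2 + t ^ 2) := ⟨_, rfl⟩
  have hD0 : 0 < D := by rw [hD]; exact Real.sqrt_pos.2 h0
  have hD2 : D ^ 2 = (r - R) ^ 2 + t ^ 2 := by rw [hD]; exact Real.sq_sqrt h0.le
  have hDρ : D < ρ := by nlinarith
  have hu : |r - R| ≤ D := abs_le_of_sq_le_sq (by nlinarith) hD0.le
  have hu' := abs_le.1 hu
  have hr1 : R - ρ ≤ r := by linarith
  have hRρ' : 0 < R - ρ := by linarith
  have hr : 0 < r := by linarith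
  have hE : 0 < D / r := by positivity
  have hN : 0 < (r - R) ^ 2 + 4 * r ^ 2 * t ^ 2 := by
    rcases eq_or_ne t 0 with rfl | ht
    · nlinarith
    · positivity
  obtain ⟨σ, hσ⟩ : ∃ σ, σ = |r - R| / D := ⟨_, rfl⟩
  have hσ0 : 0 ≤ σ := by rw [hσ]; positivity
  have hσ1 : σ ≤ 1 := by rw [hσ]; exact (div_le_one hD0).2 hu
  have huσ : |r - R| = σ * D := by rw [hσ]; field_simp
  have huσ2 : (r - R) ^ 2 = σ ^ 2 * D ^ 2 := by rw [← sq_abs, huσ]; ring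
  have ht2 : t ^ 2 = (1 - σ ^ 2) * D ^ 2 := by linarith
  have hm : 0 < 4 * r ^ 2 := by positivity
  have hW : 0 < σ ^ 2 + 4 * r ^ 2 * (1 - σ ^ 2) := by
    have : (r - R) ^ 2 + 4 * r ^ 2 * t ^ 2 = (σ ^ 2 + 4 * r ^ 2 * (1 - σ ^ 2)) * D ^ 2 := by
      rw [huσ2, ht2]; ring
    rw [this] at hN
    exact pos_of_mul_pos_left hN (by positivity)
  rw [← hD2]
  rcases le_or_gt R r with hc | hc
  · have hus : r - R = σ * D := by rw [← huσ, abs_of_nonneg (by linarith)]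
    have key := norm_ineq_pos (E := D / r) (m := 4 * r ^ 2) hk hp hE hm hσ0 hσ1
      ((div_le_one hr).2 (by linarith))
    rw [hus, ht2]
    have : (1 - σ ^ 2) * D ^ 2 + 4 * r ^ 2 * (σ * D) ^ 2 + k * (σ * D) * D ^ 2 / r +
      (p - 2) * ((1 - σ ^ 2) * D ^ 2 / ((σ * D) ^ 2 + 4 * r ^ 2 * ((1 - σ ^ 2) * D ^ 2))) *
        ((σ * D) ^ 2 * (4 * r ^ 2 - 1) ^ 2 + 4 * r * (σ * D) * D ^ 2)
      = D ^ 2 / (σ ^ 2 + 4 * r ^ 2 * (1 - σ ^ 2)) *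
        (((1 - σ ^ 2) + 4 * r ^ 2 * σ ^ 2 + k * σ * (D / r)) * (σ ^ 2 + 4 * r ^ 2 * (1 - σ ^ 2)) +
      (p - 2) * (1 - σ ^ 2) * (σ ^ 2 * (4 * r ^ 2 - 1) ^ 2 + 4 * r ^ 2 * σ * (D / r))) := by
      have e : (σ * D) ^ 2 + 4 * r ^ 2 * ((1 - σ ^ 2) * D ^ 2)
        = (σ ^ 2 + 4 * r ^ 2 * (1 - σ ^ 2)) * D ^ 2 := by ring
      rw [e]
      generalize σ ^ 2 + 4 * r ^ 2 * (1 - σ ^ 2) = W at *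
      field_simp
    rw [this]
    exact mul_nonneg (by positivity) key
  · have hus : r - R = -(σ * D) := by rw [← huσ, abs_of_neg (by linarith)]; ring
    have a1 : k * D ≤ k * ρ := mul_le_mul_of_nonneg_left hDρ.le hk
    have key := norm_ineq_neg (E := D / r) (m := 4 * r ^ 2) (k := k) (p := p) (σ := σ)
      hk hp hE hm hσ0 hσ1
      (by
        rw [← mul_div_assoc, div_le_iff₀ hr]
        have : (R - ρ) ^ 3 ≤ r ^ 3 := pow_le_pow_left₀ hRρ'.le hr1 3
        nlinarith)
      (fun hp2 => by
        rw [← mul_div_assoc, div_le_iff₀ hr]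
        have := h2 hp2
        have : (p - 1) * (R - ρ) ≤ (p - 1) * r := mul_le_mul_of_nonneg_left hr1 (by linarith)
        linarith)
      (fun hp2 => by
        rw [← mul_div_assoc, div_le_iff₀ hr]
        have := h3 hp2
        have : (k + p - 2) * D ≤ (k + p - 2) * ρ :=
          mul_le_mul_of_nonneg_left hDρ.le (by linarith)
        linarith)
    rw [hus, ht2]
    have : (1 - σ ^ 2) * D ^ 2 + 4 * r ^ 2 * (-(σ * D)) ^ 2 + k * (-(σ * D)) * D ^ 2 / r +
      (p - 2) * ((1 - σ ^ 2) * D ^ 2 / ((-(σ * D)) ^ 2 + 4 * r ^ 2 * ((1 - σ ^ 2) * D ^ 2))) *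
        ((-(σ * D)) ^ 2 * (4 * r ^ 2 - 1) ^ 2 + 4 * r * (-(σ * D)) * D ^ 2)
      = D ^ 2 / (σ ^ 2 + 4 * r ^ 2 * (1 - σ ^ 2)) *
        (((1 - σ ^ 2) + 4 * r ^ 2 * σ ^ 2 - k * σ * (D / r)) * (σ ^ 2 + 4 * r ^ 2 * (1 - σ ^ 2)) +
      (p - 2) * (1 - σ ^ 2) * (σ ^ 2 * (4 * r ^ 2 - 1) ^ 2 - 4 * r ^ 2 * σ * (D / r))) := by
      have e : (-(σ * D)) ^ 2 + 4 * r ^ 2 * ((1 - σ ^ 2) * D ^ 2)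
        = (σ ^ 2 + 4 * r ^ 2 * (1 - σ ^ 2)) * D ^ 2 := by ring
      rw [e]
      generalize σ ^ 2 + 4 * r ^ 2 * (1 - σ ^ 2) = W at *
      field_simp
      ring
    rw [this]
    exact mul_nonneg (by positivity) key

/-- In each of the four ranges of `p`, the hypothesis `β ρ ≤ R` yields the bound on `R - ρ` that
the sign of the `p`-Laplacian requires.  For `2 < p < (13 + √(32 n - 7)) / 8` this is because the
quadratic is nonnegative at `1 / (2 n + p - 3)`, so its positive root lies to the left. -/
lemma radius_bounds {n : ℕ} (hn : 1 ≤ n) {p R ρ β : ℝ} (hp : 1 < p) (hρ : 0 < ρ)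
    (hβ : (p < 2 ∧
        β = max ((2 * (n : ℝ) + p - 2) / (p - 1)) ((2 * (n : ℝ) - p + 1) / (2 * (2 - p)))) ∨
      (p = 2 ∧ β = 2 * (n : ℝ)) ∨
      ((13 + Real.sqrt (32 * (n : ℝ) - 7)) / 8 ≤ p ∧ β = 2 * (n : ℝ) + p - 2) ∨
      (2 < p ∧ p < (13 + Real.sqrt (32 * (n : ℝ) - 7)) / 8 ∧
        ∃ a : ℝ, 0 < a ∧
          (2 * (n : ℝ) + p - 3) ^ 2 * a ^ 2 +
              4 * ((p - 2) * (2 * (n : ℝ) + p - 3) + (p - 1) * (2 * (n : ℝ) - 1)) * a -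
              4 * (2 * p - 3) = 0 ∧
          β = 1 + 1 / a))
    (hR2 : β * ρ ≤ R) :
    (p < 2 → (2 * (n : ℝ) - 1) * ρ ≤ (p - 1) * (R - ρ)) ∧
    (2 ≤ p → ((2 * (n : ℝ) - 1) + p - 2) * ρ ≤ R - ρ) := by
  have hn' : (1 : ℝ) ≤ n := by exact_mod_cast hn
  rcases hβ with ⟨h, rfl⟩ | ⟨rfl, rfl⟩ | ⟨h, rfl⟩ | ⟨h2, h, a, ha, hq, rfl⟩
  · refine ⟨fun _ => ?_, fun h' => absurd h' (not_le.2 h)⟩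
    have : (2 * (n : ℝ) + p - 2) / (p - 1) * ρ ≤ R :=
      le_trans (mul_le_mul_of_nonneg_right (le_max_left _ _) hρ.le) hR2
    rw [div_mul_eq_mul_div, div_le_iff₀ (by linarith)] at this
    nlinarith
  · exact ⟨fun h' => absurd h' (lt_irrefl _), fun _ => by nlinarith⟩
  · have : 2 ≤ p := by
      have : (3 : ℝ) ≤ Real.sqrt (32 * (n : ℝ) - 7) := Real.le_sqrt_of_sq_le (by linarith)
      linarith
    exact ⟨fun h' => absurd h' (not_lt.2 this), fun _ => by nlinarith⟩
  · refine ⟨fun h' => absurd h2.le (not_le.2 h'), fun _ => ?_⟩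
    have hk : (4 * p - 5) * (p - 2) < 2 * n - 1 := by
      have h8 : 8 * p - 13 < √(32 * (n : ℝ) - 7) := by linarith
      have : (8 * p - 13) ^ 2 < 32 * n - 7 := (Real.lt_sqrt (by linarith)).1 h8
      nlinarith
    obtain ⟨L, hL⟩ : ∃ L, L = 2 * (n : ℝ) + p - 3 := ⟨_, rfl⟩
    have hL1 : 1 < L := by rw [hL]; linarith
    rw [← hL] at hq
    have hLa : L * a ≤ 1 := by
      by_contra! hcon
      have e1 : 0 < (L * a) ^ 2 - 1 := by nlinarith
      have e2 : 4 * (p - 1) * (2 * n - 1) < 4 * (p - 1) * (2 * n - 1) * (L * a) := by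
        have : 0 < 4 * (p - 1) * (2 * (n : ℝ) - 1) := by
          apply mul_pos <;> nlinarith
        nlinarith
      have e3 : L * (L ^ 2 * a ^ 2 + 4 * ((p - 2) * L + (p - 1) * (2 * n - 1)) * a
          - 4 * (2 * p - 3)) = 0 := by rw [hq]; ring
      have e4 : 4 * (p - 2) * L ≤ 4 * (p - 2) * L * (L * a) := by
        have : 0 < 4 * (p - 2) * L := by
          apply mul_pos <;> linarith
        nlinarith
      have e5 : 0 < L * ((L * a) ^ 2 - 1) := by positivity
      have e6 : (5 - 4 * p) * L + 4 * (p - 1) * (2 * n - 1) < 0 := by nlinarith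
      rw [hL] at e6
      nlinarith
    have : L ≤ 1 / a := (le_div_iff₀ ha).2 hLa
    have e : (2 * (n : ℝ) - 1 + p - 2) = L := by rw [hL]; ring
    rw [e]
    nlinarith

/-! ### Functions of `(r, t)` -/

/-- `δ = √((r - R)² + t²)`, the Euclidean distance to the core `{r = R, t = 0}`, in the
coordinates `z = (r, t)`. -/
def coreDist (R : ℝ) (z : ℝ × ℝ) : ℝ := √((z.1 - R) ^ 2 + z.2 ^ 2)

/-- `|∇_{ℍⁿ} δ|²` in the coordinates `z = (r, t)`. -/
def gradSq (R : ℝ) (z : ℝ × ℝ) : ℝ :=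
  ((z.1 - R) ^ 2 + 4 * z.1 ^ 2 * z.2 ^ 2) / ((z.1 - R) ^ 2 + z.2 ^ 2)

/-- The coefficient `A` in `|∇_{ℍⁿ} δ|^(p-2) ∇_{ℍⁿ} δ = A (x, y) + B (y, -x)`. -/
def coefA (p R : ℝ) (z : ℝ × ℝ) : ℝ :=
  gradSq R z ^ ((p - 2) / 2) * ((z.1 - R) / (z.1 * coreDist R z))

/-- The coefficient `B` in `|∇_{ℍⁿ} δ|^(p-2) ∇_{ℍⁿ} δ = A (x, y) + B (y, -x)`. -/
def coefB (p R : ℝ) (z : ℝ × ℝ) : ℝ :=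
  gradSq R z ^ ((p - 2) / 2) * (2 * z.2 / coreDist R z)

lemma num_pos {R r t : ℝ} (hr : 0 < r) (h0 : 0 < (r - R) ^ 2 + t ^ 2) :
    0 < (r - R) ^ 2 + 4 * r ^ 2 * t ^ 2 := by
  rcases eq_or_ne t 0 with rfl | ht
  · nlinarith
  · positivity

lemma gradSq_pos {R : ℝ} {z : ℝ × ℝ} (hr : 0 < z.1) (h0 : 0 < (z.1 - R) ^ 2 + z.2 ^ 2) :
    0 < gradSq R z := div_pos (num_pos hr h0) h0

lemma coreDist_pos {R : ℝ} {z : ℝ × ℝ} (h0 : 0 < (z.1 - R) ^ 2 + z.2 ^ 2) :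
    0 < coreDist R z := Real.sqrt_pos.2 h0

lemma contDiffAt_coreDist {R : ℝ} {z : ℝ × ℝ} (h0 : 0 < (z.1 - R) ^ 2 + z.2 ^ 2) :
    ContDiffAt ℝ 1 (coreDist R) z := by
  unfold coreDist
  exact ContDiffAt.sqrt (by fun_prop) h0.ne'

lemma contDiffAt_gradSq {R : ℝ} {z : ℝ × ℝ} (h0 : 0 < (z.1 - R) ^ 2 + z.2 ^ 2) :
    ContDiffAt ℝ 1 (gradSq R) z := by
  unfold gradSq
  exact ContDiffAt.div (by fun_prop) (by fun_prop) h0.ne'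

lemma contDiffAt_coefA {p R : ℝ} {z : ℝ × ℝ} (hr : 0 < z.1)
    (h0 : 0 < (z.1 - R) ^ 2 + z.2 ^ 2) : ContDiffAt ℝ 1 (coefA p R) z := by
  unfold coefA
  refine ((contDiffAt_gradSq h0).rpow_const_of_ne (gradSq_pos hr h0).ne').mul ?_
  exact ContDiffAt.div (by fun_prop) (ContDiffAt.mul (by fun_prop) (contDiffAt_coreDist h0))
    (mul_pos hr (coreDist_pos h0)).ne'

lemma contDiffAt_coefB {p R : ℝ} {z : ℝ × ℝ} (hr : 0 < z.1)
    (h0 : 0 < (z.1 - R) ^ 2 + z.2 ^ 2) : ContDiffAt ℝ 1 (coefB p R) z := by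
  unfold coefB
  refine ((contDiffAt_gradSq h0).rpow_const_of_ne (gradSq_pos hr h0).ne').mul ?_
  exact ContDiffAt.div (by fun_prop) (contDiffAt_coreDist h0) (coreDist_pos h0).ne'

lemma hasDerivAt_coreDist_fst {R r t : ℝ} (h0 : 0 < (r - R) ^ 2 + t ^ 2) :
    HasDerivAt (fun r' => coreDist R (r', t)) ((r - R) / coreDist R (r, t)) r := by
  have h : HasDerivAt (fun r' => (r' - R) ^ 2 + t ^ 2) (2 * (r - R)) r := by
    simpa using (((hasDerivAt_id r).sub_const R).pow 2).add_const (t ^ 2)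
  have := h.sqrt h0.ne'
  rwa [mul_div_mul_left _ _ two_ne_zero] at this

lemma hasDerivAt_coreDist_snd {R r t : ℝ} (h0 : 0 < (r - R) ^ 2 + t ^ 2) :
    HasDerivAt (fun t' => coreDist R (r, t')) (t / coreDist R (r, t)) t := by
  have h : HasDerivAt (fun t' => (r - R) ^ 2 + t' ^ 2) (2 * t) t := by
    simpa using ((hasDerivAt_id t).pow 2).const_add ((r - R) ^ 2)
  have := h.sqrt h0.ne'
  rwa [mul_div_mul_left _ _ two_ne_zero] at this

lemma hasDerivAt_gradSq_fst {R r t : ℝ} (h0 : 0 < (r - R) ^ 2 + t ^ 2) :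
    HasDerivAt (fun r' => gradSq R (r', t))
      (((2 * (r - R) + 8 * r * t ^ 2) * ((r - R) ^ 2 + t ^ 2) -
        ((r - R) ^ 2 + 4 * r ^ 2 * t ^ 2) * (2 * (r - R))) / ((r - R) ^ 2 + t ^ 2) ^ 2) r := by
  have h : HasDerivAt (fun r' => (r' - R) ^ 2 + t ^ 2) (2 * (r - R)) r := by
    simpa using (((hasDerivAt_id r).sub_const R).pow 2).add_const (t ^ 2)
  have h' : HasDerivAt (fun r' => (r' - R) ^ 2 + 4 * r' ^ 2 * t ^ 2)
      (2 * (r - R) + 8 * r * t ^ 2) r := by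
    have := (((hasDerivAt_id r).sub_const R).pow 2).add
      ((((hasDerivAt_id r).pow 2).const_mul 4).mul_const (t ^ 2))
    refine this.congr_deriv ?_
    simp only [id, Nat.cast_ofNat]; ring
  exact h'.div h h0.ne'

lemma hasDerivAt_gradSq_snd {R r t : ℝ} (h0 : 0 < (r - R) ^ 2 + t ^ 2) :
    HasDerivAt (fun t' => gradSq R (r, t'))
      (((8 * r ^ 2 * t) * ((r - R) ^ 2 + t ^ 2) -
        ((r - R) ^ 2 + 4 * r ^ 2 * t ^ 2) * (2 * t)) / ((r - R) ^ 2 + t ^ 2) ^ 2) t := by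
  have h : HasDerivAt (fun t' => (r - R) ^ 2 + t' ^ 2) (2 * t) t := by
    simpa using ((hasDerivAt_id t).pow 2).const_add ((r - R) ^ 2)
  have h' : HasDerivAt (fun t' => (r - R) ^ 2 + 4 * r ^ 2 * t' ^ 2) (8 * r ^ 2 * t) t := by
    have := (((hasDerivAt_id t).pow 2).const_mul (4 * r ^ 2)).const_add ((r - R) ^ 2)
    refine this.congr_deriv ?_
    simp only [id, Nat.cast_ofNat]; ring
  exact h'.div h h0.ne'

/-- The algebra behind `coef_divergence`, with `u = r - R`, `D = δ`, `N = δ² |∇δ|²` and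
`w = |∇δ|^(p-2)`. -/
lemma coef_algebra {k p r t u D N w : ℝ} (hr : 0 < r) (hD : 0 < D) (hN : 0 < N)
    (hD2 : u ^ 2 + t ^ 2 = D ^ 2) (hNe : u ^ 2 + 4 * r ^ 2 * t ^ 2 = N) :
    (k + 1) * (w * (u / (r * D))) +
      r * (((2 * u + 8 * r * t ^ 2) * D ^ 2 - N * (2 * u)) / (D ^ 2) ^ 2 * ((p - 2) / 2) *
          (w * (D ^ 2 / N)) * (u / (r * D)) +
        w * ((1 * (r * D) - u * (1 * D + r * (u / D))) / (r * D) ^ 2)) +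
      2 * r ^ 2 * ((8 * r ^ 2 * t * D ^ 2 - N * (2 * t)) / (D ^ 2) ^ 2 * ((p - 2) / 2) *
          (w * (D ^ 2 / N)) * (2 * t / D) +
        w * ((2 * 1 * D - 2 * t * (t / D)) / D ^ 2)) =
    w / D ^ 3 * (t ^ 2 + 4 * r ^ 2 * u ^ 2 + k * u * D ^ 2 / r +
      (p - 2) * (t ^ 2 / N) * (u ^ 2 * (4 * r ^ 2 - 1) ^ 2 + 4 * r * u * D ^ 2)) := by
  have e1 : (k + 1) * (u / (r * D)) +
      r * ((1 * (r * D) - u * (1 * D + r * (u / D))) / (r * D) ^ 2) +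
      2 * r ^ 2 * ((2 * 1 * D - 2 * t * (t / D)) / D ^ 2) =
      (t ^ 2 + 4 * r ^ 2 * u ^ 2 + k * u * D ^ 2 / r) / D ^ 3 := by
    field_simp
    linear_combination (-r - 4 * r ^ 3) * hD2
  have e2 : r * (((2 * u + 8 * r * t ^ 2) * D ^ 2 - N * (2 * u)) / (D ^ 2) ^ 2 * ((p - 2) / 2) *
          (D ^ 2 / N) * (u / (r * D))) +
      2 * r ^ 2 * ((8 * r ^ 2 * t * D ^ 2 - N * (2 * t)) / (D ^ 2) ^ 2 * ((p - 2) / 2) *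
          (D ^ 2 / N) * (2 * t / D)) =
      (p - 2) * (t ^ 2 / N) * (u ^ 2 * (4 * r ^ 2 - 1) ^ 2 + 4 * r * u * D ^ 2) / D ^ 3 := by
    have e3 : ((2 * u + 8 * r * t ^ 2) * D ^ 2 - N * (2 * u)) * u +
        4 * r ^ 2 * ((8 * r ^ 2 * t * D ^ 2 - N * (2 * t)) * t) =
        2 * t ^ 2 * (u ^ 2 * (4 * r ^ 2 - 1) ^ 2 + 4 * r * u * D ^ 2) := by
      rw [← hNe, ← hD2]; ring
    field_simp
    linear_combination (p - 2) * e3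
  linear_combination w * e1 + w * e2

/-- `(k + 1) A + r ∂_r A + 2 r² ∂_t B` is the horizontal `p`-Laplacian of `δ` (with `k = 2n - 1`),
here in closed form. -/
lemma coef_divergence {p R r t : ℝ} (k : ℝ) (hr : 0 < r) (h0 : 0 < (r - R) ^ 2 + t ^ 2) :
    ∃ a b, HasDerivAt (fun r' => coefA p R (r', t)) a r ∧
      HasDerivAt (fun t' => coefB p R (r, t')) b t ∧
      (k + 1) * coefA p R (r, t) + r * a + 2 * r ^ 2 * b =
        gradSq R (r, t) ^ ((p - 2) / 2) / coreDist R (r, t) ^ 3 *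
        (t ^ 2 + 4 * r ^ 2 * (r - R) ^ 2 + k * (r - R) * ((r - R) ^ 2 + t ^ 2) / r +
      (p - 2) * (t ^ 2 / ((r - R) ^ 2 + 4 * r ^ 2 * t ^ 2)) *
        ((r - R) ^ 2 * (4 * r ^ 2 - 1) ^ 2 + 4 * r * (r - R) * ((r - R) ^ 2 + t ^ 2))) := by
  have hD : 0 < coreDist R (r, t) := coreDist_pos h0
  have hP : 0 < gradSq R (r, t) := gradSq_pos hr h0
  have hN := num_pos hr h0
  have hA1 := ((hasDerivAt_gradSq_fst h0).rpow_const (p := (p - 2) / 2) (Or.inl hP.ne')).mul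
    (((hasDerivAt_id r).sub_const R).div ((hasDerivAt_id r).mul (hasDerivAt_coreDist_fst h0))
      (mul_pos hr hD).ne')
  have hB1 := ((hasDerivAt_gradSq_snd h0).rpow_const (p := (p - 2) / 2) (Or.inl hP.ne')).mul
    (((hasDerivAt_id t).const_mul 2).div (hasDerivAt_coreDist_snd h0) hD.ne')
  refine ⟨_, _, hA1, hB1, ?_⟩
  have hw : gradSq R (r, t) ^ ((p - 2) / 2 - 1) = gradSq R (r, t) ^ ((p - 2) / 2) *
      (((r - R) ^ 2 + t ^ 2) / ((r - R) ^ 2 + 4 * r ^ 2 * t ^ 2)) := by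
    rw [Real.rpow_sub_one hP.ne', gradSq, div_div_eq_mul_div, mul_div_assoc]
  rw [hw]
  have hD2 : (r - R) ^ 2 + t ^ 2 = coreDist R (r, t) ^ 2 := (Real.sq_sqrt h0.le).symm
  rw [hD2]
  simp only [coefA]
  exact coef_algebra hr hD hN hD2 rfl

/-! ### Horizontal derivatives -/

section calculus

open Heis

variable {n : ℕ} {f g : Hpt n → ℝ} {ξ : Hpt n}

lemma XD_mul (hf : DifferentiableAt ℝ f ξ) (hg : DifferentiableAt ℝ g ξ) (i : Fin n) :
    XD (fun η => f η * g η) ξ i = f ξ * XD g ξ i + g ξ * XD f ξ i := by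
  simp [XD, fderiv_fun_mul hf hg]

lemma YD_mul (hf : DifferentiableAt ℝ f ξ) (hg : DifferentiableAt ℝ g ξ) (i : Fin n) :
    YD (fun η => f η * g η) ξ i = f ξ * YD g ξ i + g ξ * YD f ξ i := by
  simp [YD, fderiv_fun_mul hf hg]

lemma XD_comp {F : ℝ → ℝ} {F' : ℝ} (hF : HasDerivAt F F' (f ξ)) (hf : DifferentiableAt ℝ f ξ)
    (i : Fin n) : XD (fun η => F (f η)) ξ i = F' * XD f ξ i := by
  have : HasFDerivAt (fun η => F (f η)) (F' • fderiv ℝ f ξ) ξ :=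
    hF.comp_hasFDerivAt ξ hf.hasFDerivAt
  simp [XD, this.fderiv]

lemma YD_comp {F : ℝ → ℝ} {F' : ℝ} (hF : HasDerivAt F F' (f ξ)) (hf : DifferentiableAt ℝ f ξ)
    (i : Fin n) : YD (fun η => F (f η)) ξ i = F' * YD f ξ i := by
  have : HasFDerivAt (fun η => F (f η)) (F' • fderiv ℝ f ξ) ξ :=
    hF.comp_hasFDerivAt ξ hf.hasFDerivAt
  simp [YD, this.fderiv]

lemma hdot_mul (d : Hpt n → ℝ) (hf : DifferentiableAt ℝ f ξ) (hg : DifferentiableAt ℝ g ξ) :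
    hdot d (fun η => f η * g η) ξ = f ξ * hdot d g ξ + g ξ * hdot d f ξ := by
  simp only [hdot, XD_mul hf hg, YD_mul hf hg, Finset.mul_sum, ← Finset.sum_add_distrib]
  exact Finset.sum_congr rfl fun i _ => by ring

lemma hdot_comp (d : Hpt n → ℝ) {F : ℝ → ℝ} {F' : ℝ} (hF : HasDerivAt F F' (f ξ))
    (hf : DifferentiableAt ℝ f ξ) : hdot d (fun η => F (f η)) ξ = F' * hdot d f ξ := by
  simp only [hdot, XD_comp hF hf, YD_comp hF hf, Finset.mul_sum]
  exact Finset.sum_congr rfl fun i _ => by ring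

lemma hdot_self_nonneg (d : Hpt n → ℝ) (ξ : Hpt n) : 0 ≤ hdot d d ξ :=
  Finset.sum_nonneg fun i _ => by nlinarith [sq_nonneg (XD d ξ i), sq_nonneg (YD d ξ i)]

lemma hgradNorm_sq (d : Hpt n → ℝ) (ξ : Hpt n) : hgradNorm d ξ ^ 2 = hdot d d ξ := by
  rw [hgradNorm, Real.sq_sqrt (Finset.sum_nonneg fun i _ => by positivity)]
  simp only [hdot, sq]

lemma hgradNorm_nonneg (d : Hpt n → ℝ) (ξ : Hpt n) : 0 ≤ hgradNorm d ξ := Real.sqrt_nonneg _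

/-- Cauchy–Schwarz for the horizontal gradients, viewed as vectors indexed by `Fin n ⊕ Fin n`. -/
lemma abs_hdot_le (d u : Hpt n → ℝ) (ξ : Hpt n) :
    |hdot d u ξ| ≤ hgradNorm d ξ * hgradNorm u ξ := by
  apply abs_le_of_sq_le_sq _ (mul_nonneg (hgradNorm_nonneg _ _) (hgradNorm_nonneg _ _))
  rw [mul_pow, hgradNorm_sq, hgradNorm_sq]
  have := Finset.sum_mul_sq_le_sq_mul_sq Finset.univ
    (fun j : Fin n ⊕ Fin n => j.elim (XD d ξ) (YD d ξ))
    (fun j : Fin n ⊕ Fin n => j.elim (XD u ξ) (YD u ξ))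
  simp only [Fintype.sum_sum_type, Sum.elim_inl, Sum.elim_inr, ← Finset.sum_add_distrib] at this
  simpa only [hdot, sq] using this

lemma rr_sq (ξ : Hpt n) : rr ξ ^ 2 = (∑ i, ξ.1 i ^ 2) + ∑ i, ξ.2.1 i ^ 2 :=
  Real.sq_sqrt (add_nonneg (Finset.sum_nonneg fun _ _ => sq_nonneg _)
    (Finset.sum_nonneg fun _ _ => sq_nonneg _))

lemma continuous_rr : Continuous (rr : Hpt n → ℝ) := by
  unfold rr
  fun_prop

lemma contDiffAt_rr (hr : 0 < rr ξ) : ContDiffAt ℝ 1 (rr : Hpt n → ℝ) ξ := by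
  unfold rr at hr ⊢
  exact ContDiffAt.sqrt (by fun_prop) (Real.sqrt_pos.1 hr).ne'

lemma fderiv_rr_apply (hr : 0 < rr ξ) (v : Hpt n) :
    fderiv ℝ rr ξ v = ((∑ i, ξ.1 i * v.1 i) + ∑ i, ξ.2.1 i * v.2.1 i) / rr ξ := by
  have hd : HasFDerivAt rr (fderiv ℝ rr ξ) ξ :=
    ((contDiffAt_rr hr).differentiableAt one_ne_zero).hasFDerivAt
  have h1 : HasFDerivAt (fun η : Hpt n => rr η ^ 2) _ ξ := hd.pow 2
  have hx : ∀ i, HasFDerivAt (fun η : Hpt n => η.1 i ^ 2) _ ξ := fun i =>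
    (((ContinuousLinearMap.proj (R := ℝ) (φ := fun _ : Fin n => ℝ) i).comp
      (ContinuousLinearMap.fst ℝ (Fin n → ℝ) ((Fin n → ℝ) × ℝ))).hasFDerivAt (x := ξ)).pow 2
  have hy : ∀ i, HasFDerivAt (fun η : Hpt n => η.2.1 i ^ 2) _ ξ := fun i =>
    (((ContinuousLinearMap.proj (R := ℝ) (φ := fun _ : Fin n => ℝ) i).comp
      ((ContinuousLinearMap.fst ℝ (Fin n → ℝ) ℝ).comp
      (ContinuousLinearMap.snd ℝ (Fin n → ℝ) ((Fin n → ℝ) × ℝ)))).hasFDerivAt (x := ξ)).pow 2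
  have h2 := (HasFDerivAt.fun_sum (u := Finset.univ) fun i _ => hx i).add
    (HasFDerivAt.fun_sum (u := Finset.univ) fun i _ => hy i)
  have h3 : (fun η : Hpt n => rr η ^ 2) = (fun η : Hpt n => ∑ i, η.1 i ^ 2) +
      fun η : Hpt n => ∑ i, η.2.1 i ^ 2 := funext fun η => rr_sq η
  rw [h3] at h1
  have h4 := congrArg (fun L => L v) (h1.unique h2)
  simp at h4
  rw [eq_div_iff hr.ne']
  simp only [mul_assoc, ← Finset.mul_sum] at h4
  linarith

/-- The horizontal derivatives of a function of `(r, t)`. -/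
lemma XD_polar {α : ℝ × ℝ → ℝ} {a b : ℝ} (hr : 0 < rr ξ)
    (h : DifferentiableAt ℝ α (rr ξ, ξ.2.2))
    (ha : HasDerivAt (fun r => α (r, ξ.2.2)) a (rr ξ))
    (hb : HasDerivAt (fun t => α (rr ξ, t)) b ξ.2.2) (i : Fin n) :
    XD (fun η => α (rr η, η.2.2)) ξ i = a * (ξ.1 i / rr ξ) + 2 * ξ.2.1 i * b ∧
    YD (fun η => α (rr η, η.2.2)) ξ i = a * (ξ.2.1 i / rr ξ) - 2 * ξ.1 i * b := by
  have hd : HasFDerivAt rr (fderiv ℝ rr ξ) ξ :=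
    ((contDiffAt_rr hr).differentiableAt one_ne_zero).hasFDerivAt
  have hz : HasFDerivAt (fun η : Hpt n => (rr η, η.2.2)) ((fderiv ℝ rr ξ).prod
      ((ContinuousLinearMap.snd ℝ (Fin n → ℝ) ℝ).comp
      (ContinuousLinearMap.snd ℝ (Fin n → ℝ) ((Fin n → ℝ) × ℝ)))) ξ :=
    hd.prodMk ((ContinuousLinearMap.snd ℝ (Fin n → ℝ) ℝ).comp
      (ContinuousLinearMap.snd ℝ (Fin n → ℝ) ((Fin n → ℝ) × ℝ))).hasFDerivAt
  have hα := h.hasFDerivAt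
  have e1 : fderiv ℝ α (rr ξ, ξ.2.2) (1, 0) = a :=
    (hα.comp_hasDerivAt (rr ξ) ((hasDerivAt_id _).prodMk (hasDerivAt_const _ _))).unique ha
  have e2 : fderiv ℝ α (rr ξ, ξ.2.2) (0, 1) = b :=
    (hα.comp_hasDerivAt ξ.2.2 ((hasDerivAt_const _ _).prodMk (hasDerivAt_id _))).unique hb
  have e3 : ∀ x y : ℝ, fderiv ℝ α (rr ξ, ξ.2.2) (x, y) = x * a + y * b := fun x y => by
    rw [← e1, ← e2, ← smul_eq_mul, ← smul_eq_mul, ← map_smul, ← map_smul, ← map_add]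
    simp
  have hc : HasFDerivAt (fun η : Hpt n => α (rr η, η.2.2)) _ ξ := hα.comp ξ hz
  constructor
  · simp only [XD, hc.fderiv, ContinuousLinearMap.comp_apply, ContinuousLinearMap.prod_apply, e3,
      fderiv_rr_apply hr]
    simp [Pi.single_apply]
    ring
  · simp only [YD, hc.fderiv, ContinuousLinearMap.comp_apply, ContinuousLinearMap.prod_apply, e3,
      fderiv_rr_apply hr]
    simp [Pi.single_apply]
    ring

lemma XD_fst (i : Fin n) : XD (fun η => η.1 i) ξ i = 1 ∧ YD (fun η => η.1 i) ξ i = 0 := by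
  have h : HasFDerivAt (fun η : Hpt n => η.1 i) _ ξ :=
    ((ContinuousLinearMap.proj (R := ℝ) (φ := fun _ : Fin n => ℝ) i).comp
      (ContinuousLinearMap.fst ℝ (Fin n → ℝ) ((Fin n → ℝ) × ℝ))).hasFDerivAt
  constructor
  · simp [XD, h.fderiv]
  · simp [YD, h.fderiv]

lemma XD_snd (i : Fin n) : XD (fun η => η.2.1 i) ξ i = 0 ∧ YD (fun η => η.2.1 i) ξ i = 1 := by
  have h : HasFDerivAt (fun η : Hpt n => η.2.1 i) _ ξ :=
    ((ContinuousLinearMap.proj (R := ℝ) (φ := fun _ : Fin n => ℝ) i).comp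
      ((ContinuousLinearMap.fst ℝ (Fin n → ℝ) ℝ).comp
      (ContinuousLinearMap.snd ℝ (Fin n → ℝ) ((Fin n → ℝ) × ℝ)))).hasFDerivAt
  constructor
  · simp [XD, h.fderiv]
  · simp [YD, h.fderiv]

lemma differentiableAt_polar {α : ℝ × ℝ → ℝ} (hr : 0 < rr ξ)
    (h : DifferentiableAt ℝ α (rr ξ, ξ.2.2)) :
    DifferentiableAt ℝ (fun η : Hpt n => α (rr η, η.2.2)) ξ :=
  DifferentiableAt.comp (f := fun η : Hpt n => (rr η, η.2.2)) ξ h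
    (((contDiffAt_rr hr).differentiableAt one_ne_zero).prodMk (by fun_prop))

lemma contDiffAt_polar {α : ℝ × ℝ → ℝ} (hr : 0 < rr ξ)
    (h : ContDiffAt ℝ 1 α (rr ξ, ξ.2.2)) :
    ContDiffAt ℝ 1 (fun η : Hpt n => α (rr η, η.2.2)) ξ :=
  ContDiffAt.comp (f := fun η : Hpt n => (rr η, η.2.2)) ξ h
    ((contDiffAt_rr hr).prodMk (by fun_prop))

lemma XD_add (hf : DifferentiableAt ℝ f ξ) (hg : DifferentiableAt ℝ g ξ) (i : Fin n) :
    XD (fun η => f η + g η) ξ i = XD f ξ i + XD g ξ i := by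
  simp [XD, fderiv_fun_add hf hg]

lemma YD_sub (hf : DifferentiableAt ℝ f ξ) (hg : DifferentiableAt ℝ g ξ) (i : Fin n) :
    YD (fun η => f η - g η) ξ i = YD f ξ i - YD g ξ i := by
  simp [YD, fderiv_fun_sub hf hg]

/-- The horizontal divergence of the field `A (x, y) + B (y, -x)`, for `A`, `B` functions of
`(r, t)`, is `2 n A + r ∂_r A + 2 r² ∂_t B`: the combinations `∑ (x_i X_i + y_i Y_i)` and
`∑ (y_i X_i - x_i Y_i)` act on such functions as `r ∂_r` and `2 r² ∂_t`. -/
lemma divergence_polar {A B : ℝ × ℝ → ℝ} {a b : ℝ} (hr : 0 < rr ξ)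
    (hA : DifferentiableAt ℝ A (rr ξ, ξ.2.2)) (hB : DifferentiableAt ℝ B (rr ξ, ξ.2.2))
    (ha : HasDerivAt (fun r => A (r, ξ.2.2)) a (rr ξ))
    (hb : HasDerivAt (fun t => B (rr ξ, t)) b ξ.2.2) :
    ∑ i, (XD (fun η => A (rr η, η.2.2) * η.1 i + B (rr η, η.2.2) * η.2.1 i) ξ i +
      YD (fun η => A (rr η, η.2.2) * η.2.1 i - B (rr η, η.2.2) * η.1 i) ξ i) =
    2 * n * A (rr ξ, ξ.2.2) + rr ξ * a + 2 * rr ξ ^ 2 * b := by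
  have ha' := hA.hasFDerivAt.comp_hasDerivAt ξ.2.2
    ((hasDerivAt_const ξ.2.2 (rr ξ)).prodMk (hasDerivAt_id _))
  have hb' := hB.hasFDerivAt.comp_hasDerivAt (rr ξ)
    ((hasDerivAt_id _).prodMk (hasDerivAt_const (rr ξ) ξ.2.2))
  have dA := differentiableAt_polar hr hA
  have dB := differentiableAt_polar hr hB
  have dx : ∀ i, DifferentiableAt ℝ (fun η : Hpt n => η.1 i) ξ := fun i => by fun_prop
  have dy : ∀ i, DifferentiableAt ℝ (fun η : Hpt n => η.2.1 i) ξ := fun i => by fun_prop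
  have key : ∀ i, (XD (fun η => A (rr η, η.2.2) * η.1 i + B (rr η, η.2.2) * η.2.1 i) ξ i +
      YD (fun η => A (rr η, η.2.2) * η.2.1 i - B (rr η, η.2.2) * η.1 i) ξ i) =
      2 * A (rr ξ, ξ.2.2) + (a / rr ξ + 2 * b) * (ξ.1 i ^ 2 + ξ.2.1 i ^ 2) := fun i => by
    rw [XD_add (dA.fun_mul (dx i)) (dB.fun_mul (dy i)),
      YD_sub (dA.fun_mul (dy i)) (dB.fun_mul (dx i)),
      XD_mul dA (dx i), XD_mul dB (dy i), YD_mul dA (dy i), YD_mul dB (dx i),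
      (XD_fst i).1, (XD_fst i).2, (XD_snd i).1, (XD_snd i).2, (XD_polar hr hA ha ha' i).1,
      (XD_polar hr hA ha ha' i).2, (XD_polar hr hB hb' hb i).1, (XD_polar hr hB hb' hb i).2]
    ring
  rw [Finset.sum_congr rfl fun i _ => key i, Finset.sum_add_distrib, ← Finset.mul_sum,
    ← Finset.mul_sum, Finset.sum_add_distrib, ← rr_sq]
  simp only [Finset.sum_const, Finset.card_univ, Fintype.card_fin, nsmul_eq_mul]
  field_simp
  ring

/-! ### Integration by parts -/

instance isAddHaarMeasure_volume : (volume : Measure (Hpt n)).IsAddHaarMeasure :=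
  haveI : (volume : Measure ((Fin n → ℝ) × ℝ)).IsAddHaarMeasure :=
    Measure.prod.instIsAddHaarMeasure (volume : Measure (Fin n → ℝ)) (volume : Measure ℝ)
  Measure.prod.instIsAddHaarMeasure (volume : Measure (Fin n → ℝ))
    (volume : Measure ((Fin n → ℝ) × ℝ))

/-- Integration by parts against the constant function `1`. -/
lemma integral_fderiv_apply_eq_zero {h : Hpt n → ℝ} (hh : ContDiff ℝ 1 h)
    (hs : HasCompactSupport h) (v : Hpt n) : ∫ ξ, fderiv ℝ h ξ v = 0 := by
  have hc : Continuous fun ξ => fderiv ℝ h ξ v :=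
    (hh.continuous_fderiv one_ne_zero).clm_apply continuous_const
  have hi : Integrable fun ξ => fderiv ℝ h ξ v :=
    hc.integrable_of_hasCompactSupport (hs.fderiv_apply ℝ v)
  have := integral_mul_fderiv_eq_neg_fderiv_mul_of_integrable (μ := volume) (𝕜 := ℝ)
    (f := fun _ : Hpt n => (1 : ℝ)) (g := h) (v := v) (by simp) (by simpa using hi)
    (by simpa using hh.continuous.integrable_of_hasCompactSupport hs) (fun _ _ => by fun_prop)
    (fun _ _ => hh.differentiable one_ne_zero _)
  simpa using this

/-- `X_i h` and `Y_i h` have vanishing integral: the vector fields `X_i` and `Y_i` are divergence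
free. -/
lemma integral_XD_eq_zero {h : Hpt n → ℝ} (hh : ContDiff ℝ 1 h)
    (hs : HasCompactSupport h) (i : Fin n) :
    (Integrable fun ξ => XD h ξ i) ∧ (Integrable fun ξ => YD h ξ i) ∧
    ∫ ξ, XD h ξ i = 0 ∧ ∫ ξ, YD h ξ i = 0 := by
  have hd : Differentiable ℝ h := hh.differentiable one_ne_zero
  -- The `t`-direction commutes with the coefficients `2 y_i` and `-2 x_i`.
  have ex : ∀ ξ : Hpt n, XD h ξ i = fderiv ℝ h ξ (Pi.single i 1, 0, 0) +
      fderiv ℝ (fun η : Hpt n => 2 * η.2.1 i * h η) ξ (0, 0, 1) := fun ξ => by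
    have hy : HasFDerivAt (fun η : Hpt n => η.2.1 i) _ ξ :=
      ((ContinuousLinearMap.proj (R := ℝ) (φ := fun _ : Fin n => ℝ) i).comp
        ((ContinuousLinearMap.fst ℝ (Fin n → ℝ) ℝ).comp
        (ContinuousLinearMap.snd ℝ (Fin n → ℝ) ((Fin n → ℝ) × ℝ)))).hasFDerivAt
    have := ((hy.const_mul 2).mul (hd ξ).hasFDerivAt).fderiv
    rw [show (fun η : Hpt n => 2 * η.2.1 i * h η) =
      (fun η : Hpt n => 2 * η.2.1 i) * h from rfl, this, XD,
      show ((Pi.single i 1, 0, 2 * ξ.2.1 i) : Hpt n) = (Pi.single i 1, 0, 0) +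
        (2 * ξ.2.1 i) • ((0, 0, 1) : Hpt n) by simp, map_add, map_smul]
    simp
  have ey : ∀ ξ : Hpt n, YD h ξ i = fderiv ℝ h ξ (0, Pi.single i 1, 0) +
      fderiv ℝ (fun η : Hpt n => (-2) * η.1 i * h η) ξ (0, 0, 1) := fun ξ => by
    have hy : HasFDerivAt (fun η : Hpt n => η.1 i) _ ξ :=
      ((ContinuousLinearMap.proj (R := ℝ) (φ := fun _ : Fin n => ℝ) i).comp
        (ContinuousLinearMap.fst ℝ (Fin n → ℝ) ((Fin n → ℝ) × ℝ))).hasFDerivAt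
    have := ((hy.const_mul (-2)).mul (hd ξ).hasFDerivAt).fderiv
    rw [show (fun η : Hpt n => (-2) * η.1 i * h η) =
      (fun η : Hpt n => (-2) * η.1 i) * h from rfl, this, YD,
      show ((0, Pi.single i 1, -(2 * ξ.1 i)) : Hpt n) = (0, Pi.single i 1, 0) +
        ((-2) * ξ.1 i) • ((0, 0, 1) : Hpt n) by simp, map_add, map_smul]
    simp
  have cint : ∀ {k : Hpt n → ℝ} (_ : ContDiff ℝ 1 k) (_ : HasCompactSupport k) (v : Hpt n),
      Integrable fun ξ => fderiv ℝ k ξ v := fun {k} hk hs' v =>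
    ((hk.continuous_fderiv one_ne_zero).clm_apply
      continuous_const).integrable_of_hasCompactSupport (hs'.fderiv_apply ℝ v)
  have cx : ContDiff ℝ 1 (fun η : Hpt n => 2 * η.2.1 i * h η) :=
    ContDiff.mul (by fun_prop) hh
  have cy : ContDiff ℝ 1 (fun η : Hpt n => (-2) * η.1 i * h η) :=
    ContDiff.mul (by fun_prop) hh
  have sx : HasCompactSupport (fun η : Hpt n => 2 * η.2.1 i * h η) := hs.mul_left
  have sy : HasCompactSupport (fun η : Hpt n => (-2) * η.1 i * h η) := hs.mul_left
  simp only [ex, ey]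
  refine ⟨(cint hh hs _).add (cint cx sx _), (cint hh hs _).add (cint cy sy _), ?_, ?_⟩
  · rw [integral_add (cint hh hs _) (cint cx sx _), integral_fderiv_apply_eq_zero hh hs,
      integral_fderiv_apply_eq_zero cx sx, add_zero]
  · rw [integral_add (cint hh hs _) (cint cy sy _), integral_fderiv_apply_eq_zero hh hs,
      integral_fderiv_apply_eq_zero cy sy, add_zero]

end calculus

/-! ### Superharmonicity on the punctured torus -/

section torus

open Heis

variable {n : ℕ} {p R ρ : ℝ} {ξ : Hpt n} {φ : Hpt n → ℝ} {K : Set (Hpt n)}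

/-- The distance of a point of the torus to its boundary, `ρ - √((r - R)² + t²)`; it is negative
outside the closed torus. -/
def bdist (n : ℕ) (R ρ : ℝ) (ξ : Hpt n) : ℝ := ρ - √((rr ξ - R) ^ 2 + ξ.2.2 ^ 2)

/-- The open torus without its core `{d = ρ}`. -/
def punct (n : ℕ) (R ρ : ℝ) : Set (Hpt n) := {ξ | 0 < bdist n R ρ ξ ∧ bdist n R ρ ξ < ρ}

/-- The conditions on the two radii that make the numerator of the horizontal `p`-Laplacian of the
distance to the core nonnegative (`lap_numerator_nonneg` with `k = 2n - 1`). -/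
structure Admissible (n : ℕ) (p R ρ : ℝ) : Prop where
  one_le : 1 ≤ n
  one_lt : 1 < p
  pos : 0 < ρ
  lt : ρ < R
  cube : (2 * (n : ℝ) - 1) * ρ / 4 ≤ (R - ρ) ^ 3
  small : p < 2 → (2 * (n : ℝ) - 1) * ρ ≤ (p - 1) * (R - ρ)
  large : 2 ≤ p → ((2 * (n : ℝ) - 1) + p - 2) * ρ ≤ R - ρ

lemma continuous_bdist : Continuous (bdist n R ρ) := by
  have := continuous_rr (n := n)
  unfold bdist
  fun_prop

lemma bdist_le (ξ : Hpt n) : bdist n R ρ ξ ≤ ρ := sub_le_self _ (Real.sqrt_nonneg _)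

lemma isOpen_punct : IsOpen (punct n R ρ) :=
  (isOpen_lt continuous_const continuous_bdist).inter (isOpen_lt continuous_bdist continuous_const)

lemma rr_pos (hRρ : ρ < R) (h : 0 < bdist n R ρ ξ) : 0 < rr ξ := by
  have h1 : |rr ξ - R| ≤ √((rr ξ - R) ^ 2 + ξ.2.2 ^ 2) :=
    Real.abs_le_sqrt (by nlinarith [sq_nonneg ξ.2.2])
  unfold bdist at h
  linarith [neg_abs_le (rr ξ - R)]

lemma core_sq_pos (h : bdist n R ρ ξ < ρ) : 0 < (rr ξ - R) ^ 2 + ξ.2.2 ^ 2 :=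
  Real.sqrt_pos.1 (by unfold bdist at h; linarith)

lemma core_sq_lt (hρ : 0 < ρ) :
    (rr ξ - R) ^ 2 + ξ.2.2 ^ 2 < ρ ^ 2 ↔ 0 < bdist n R ρ ξ := by
  rw [bdist, sub_pos, Real.sqrt_lt' hρ]

lemma contDiffAt_bdist (hr : 0 < rr ξ) (h0 : 0 < (rr ξ - R) ^ 2 + ξ.2.2 ^ 2) :
    ContDiffAt ℝ 1 (bdist n R ρ) ξ :=
  contDiffAt_polar (α := fun z => ρ - coreDist R z) hr
    (contDiffAt_const.sub (contDiffAt_coreDist h0))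

lemma XD_bdist (hr : 0 < rr ξ) (h0 : 0 < (rr ξ - R) ^ 2 + ξ.2.2 ^ 2) (i : Fin n) :
    XD (bdist n R ρ) ξ i = -((rr ξ - R) / (rr ξ * coreDist R (rr ξ, ξ.2.2)) * ξ.1 i +
      2 * ξ.2.2 / coreDist R (rr ξ, ξ.2.2) * ξ.2.1 i) ∧
    YD (bdist n R ρ) ξ i = -((rr ξ - R) / (rr ξ * coreDist R (rr ξ, ξ.2.2)) * ξ.2.1 i -
      2 * ξ.2.2 / coreDist R (rr ξ, ξ.2.2) * ξ.1 i) := by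
  have h := XD_polar (α := fun z => ρ - coreDist R z) hr
    ((contDiffAt_const.sub (contDiffAt_coreDist h0)).differentiableAt one_ne_zero)
    ((hasDerivAt_coreDist_fst h0).const_sub ρ) ((hasDerivAt_coreDist_snd h0).const_sub ρ) i
  constructor
  · refine h.1.trans ?_
    field_simp
    ring
  · refine h.2.trans ?_
    field_simp
    ring

lemma hgradNorm_bdist_sq (hr : 0 < rr ξ) (h0 : 0 < (rr ξ - R) ^ 2 + ξ.2.2 ^ 2) :
    hgradNorm (bdist n R ρ) ξ ^ 2 = gradSq R (rr ξ, ξ.2.2) := by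
  have hD : coreDist R (rr ξ, ξ.2.2) ^ 2 = (rr ξ - R) ^ 2 + ξ.2.2 ^ 2 := Real.sq_sqrt h0.le
  have hD0 := coreDist_pos (z := (rr ξ, ξ.2.2)) h0
  have key : ∀ i, XD (bdist n R ρ) ξ i * XD (bdist n R ρ) ξ i +
      YD (bdist n R ρ) ξ i * YD (bdist n R ρ) ξ i =
      (((rr ξ - R) / (rr ξ * coreDist R (rr ξ, ξ.2.2))) ^ 2 +
        (2 * ξ.2.2 / coreDist R (rr ξ, ξ.2.2)) ^ 2) * (ξ.1 i ^ 2 + ξ.2.1 i ^ 2) := fun i => by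
    rw [(XD_bdist hr h0 i).1, (XD_bdist hr h0 i).2]
    ring
  rw [hgradNorm_sq, hdot, Finset.sum_congr rfl fun i _ => key i, ← Finset.mul_sum,
    Finset.sum_add_distrib, ← rr_sq, gradSq]
  simp only [← hD]
  field_simp
  ring

lemma hgradNorm_bdist_rpow (hr : 0 < rr ξ) (h0 : 0 < (rr ξ - R) ^ 2 + ξ.2.2 ^ 2) :
    hgradNorm (bdist n R ρ) ξ ^ (p - 2) = gradSq R (rr ξ, ξ.2.2) ^ ((p - 2) / 2) := by
  rw [← hgradNorm_bdist_sq hr h0 (ρ := ρ), ← Real.rpow_natCast,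
    ← Real.rpow_mul (hgradNorm_nonneg _ _)]
  congr 1
  push_cast
  ring

/-- The `X_i`-component of `-|∇d|^(p-2) ∇d`. -/
def fluxX (p R : ℝ) (i : Fin n) (ξ : Hpt n) : ℝ :=
  coefA p R (rr ξ, ξ.2.2) * ξ.1 i + coefB p R (rr ξ, ξ.2.2) * ξ.2.1 i

/-- The `Y_i`-component of `-|∇d|^(p-2) ∇d`. -/
def fluxY (p R : ℝ) (i : Fin n) (ξ : Hpt n) : ℝ :=
  coefA p R (rr ξ, ξ.2.2) * ξ.2.1 i - coefB p R (rr ξ, ξ.2.2) * ξ.1 i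

/-- The field `-|∇d|^(p-2) ∇d` has components `fluxX` and `fluxY`. -/
lemma weight_mul_hdot (hr : 0 < rr ξ) (h0 : 0 < (rr ξ - R) ^ 2 + ξ.2.2 ^ 2) (ψ : Hpt n → ℝ) :
    hgradNorm (bdist n R ρ) ξ ^ (p - 2) * hdot (bdist n R ρ) ψ ξ =
      -∑ i, (fluxX p R i ξ * XD ψ ξ i + fluxY p R i ξ * YD ψ ξ i) := by
  rw [hgradNorm_bdist_rpow hr h0, hdot, Finset.mul_sum, ← Finset.sum_neg_distrib]
  refine Finset.sum_congr rfl fun i _ => ?_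
  rw [(XD_bdist hr h0 i).1, (XD_bdist hr h0 i).2]
  simp only [fluxX, fluxY, coefA, coefB]
  ring

lemma contDiffAt_flux (hr : 0 < rr ξ) (h0 : 0 < (rr ξ - R) ^ 2 + ξ.2.2 ^ 2) (i : Fin n) :
    ContDiffAt ℝ 1 (fluxX p R i) ξ ∧ ContDiffAt ℝ 1 (fluxY p R i) ξ := by
  have hA := contDiffAt_polar hr (contDiffAt_coefA (p := p) (z := (rr ξ, ξ.2.2)) hr h0)
  have hB := contDiffAt_polar hr (contDiffAt_coefB (p := p) (z := (rr ξ, ξ.2.2)) hr h0)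
  unfold fluxX fluxY
  exact ⟨(hA.mul (by fun_prop)).add (hB.mul (by fun_prop)),
    (hA.mul (by fun_prop)).sub (hB.mul (by fun_prop))⟩

/-- Away from the core, `d` is `p`-superharmonic: minus its `p`-Laplacian is nonnegative. -/
lemma divergence_flux_nonneg (ha : Admissible n p R ρ) (hξ : ξ ∈ punct n R ρ) :
    0 ≤ ∑ i, (XD (fluxX p R i) ξ i + YD (fluxY p R i) ξ i) := by
  have hr := rr_pos ha.lt hξ.1
  have h0 := core_sq_pos hξ.2
  have hlt := (core_sq_lt ha.pos).2 hξ.1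
  have hn : (1 : ℝ) ≤ n := by exact_mod_cast ha.one_le
  obtain ⟨a, b, hA, hB, hab⟩ := coef_divergence (p := p) (2 * (n : ℝ) - 1) hr h0
  have hdiv := divergence_polar hr
    ((contDiffAt_coefA (p := p) (z := (rr ξ, ξ.2.2)) hr h0).differentiableAt one_ne_zero)
    ((contDiffAt_coefB (p := p) (z := (rr ξ, ξ.2.2)) hr h0).differentiableAt one_ne_zero) hA hB
  have hdiv' : ∑ i, (XD (fluxX p R i) ξ i + YD (fluxY p R i) ξ i) = _ := hdiv
  rw [hdiv', show 2 * (n : ℝ) = 2 * (n : ℝ) - 1 + 1 by ring, hab]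
  exact mul_nonneg (div_nonneg (Real.rpow_nonneg (gradSq_pos hr h0).le _)
      (pow_nonneg (coreDist_pos h0).le _))
    (lap_numerator_nonneg (by linarith) ha.one_lt ha.pos ha.lt ha.cube ha.small ha.large h0 hlt)

lemma fderiv_eq_zero_of_notMem (hK : IsClosed K) (hz : ∀ ξ ∉ K, φ ξ = 0) (hξ : ξ ∉ K) :
    fderiv ℝ φ ξ = 0 := by
  have : φ =ᶠ[nhds ξ] fun _ => 0 := by
    filter_upwards [hK.isOpen_compl.mem_nhds hξ] with η hη using hz η hη
  rw [this.fderiv_eq]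
  simp

/-- For a nonnegative `ψ` with compact support in the punctured torus, `|∇d|^(p-2) ∇d · ∇ψ`
dominates the horizontal divergence of a compactly supported field, whose integral vanishes.
Stating it this way avoids any integrability discussion for `|∇d|^(p-2) ∇d · ∇ψ`. -/
lemma exists_divergence_le (ha : Admissible n p R ρ) {ψ : Hpt n → ℝ} (hK : IsCompact K)
    (hKU : K ⊆ punct n R ρ) (hψ : ∀ ξ ∈ punct n R ρ, ContDiffAt ℝ 1 ψ ξ)
    (hz : ∀ ξ ∉ K, ψ ξ = 0) (h0 : ∀ ξ, 0 ≤ ψ ξ) :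
    ∃ S : Hpt n → ℝ, Integrable S ∧ ∫ ξ, S ξ = 0 ∧ (∀ ξ ∉ K, S ξ = 0) ∧
      ∀ ξ ∈ punct n R ρ,
        S ξ ≤ hgradNorm (bdist n R ρ) ξ ^ (p - 2) * hdot (bdist n R ρ) ψ ξ := by
  have hcd : ∀ F : Hpt n → ℝ, (∀ ξ ∈ punct n R ρ, ContDiffAt ℝ 1 F ξ) →
      ContDiff ℝ 1 (fun η => F η * ψ η) ∧ HasCompactSupport (fun η => F η * ψ η) :=
    fun F hF => by
      refine ⟨contDiff_iff_contDiffAt.2 fun ξ => ?_, HasCompactSupport.intro hK fun ξ hξ => by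
        rw [hz ξ hξ, mul_zero]⟩
      by_cases hξ : ξ ∈ K
      · exact (hF ξ (hKU hξ)).mul (hψ ξ (hKU hξ))
      · refine (contDiffAt_const (c := (0 : ℝ))).congr_of_eventuallyEq ?_
        filter_upwards [hK.isClosed.isOpen_compl.mem_nhds hξ] with η hη
        rw [hz η hη, mul_zero]
  have hflux : ∀ (i : Fin n), ∀ ξ ∈ punct n R ρ,
      ContDiffAt ℝ 1 (fluxX p R i) ξ ∧ ContDiffAt ℝ 1 (fluxY p R i) ξ := fun i ξ hξ =>
    contDiffAt_flux (rr_pos ha.lt hξ.1) (core_sq_pos hξ.2) i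
  have hX := fun i => hcd (fluxX p R i) fun ξ hξ => (hflux i ξ hξ).1
  have hY := fun i => hcd (fluxY p R i) fun ξ hξ => (hflux i ξ hξ).2
  have iX := fun i => integral_XD_eq_zero (hX i).1 (hX i).2 i
  have iY := fun i => integral_XD_eq_zero (hY i).1 (hY i).2 i
  refine ⟨fun ξ => -∑ i, (XD (fun η => fluxX p R i η * ψ η) ξ i +
    YD (fun η => fluxY p R i η * ψ η) ξ i), ?_, ?_, fun ξ hξ => ?_, fun ξ hξ => ?_⟩
  · exact (integrable_finsetSum _ fun i _ => (iX i).1.add (iY i).2.1).neg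
  · have hi : ∀ i ∈ Finset.univ, Integrable fun ξ => XD (fun η => fluxX p R i η * ψ η) ξ i +
        YD (fun η => fluxY p R i η * ψ η) ξ i := fun i _ => (iX i).1.add (iY i).2.1
    rw [integral_neg, integral_finsetSum _ hi, Finset.sum_eq_zero, neg_zero]
    intro i _
    rw [integral_add (iX i).1 (iY i).2.1, (iX i).2.2.1, (iY i).2.2.2, add_zero]
  · have hzero : ∀ F : Hpt n → ℝ, fderiv ℝ (fun η => F η * ψ η) ξ = 0 := fun F =>
      fderiv_eq_zero_of_notMem hK.isClosed (fun η hη => by rw [hz η hη, mul_zero]) hξ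
    simp [XD, YD, hzero]
  · beta_reduce
    rw [weight_mul_hdot (rr_pos ha.lt hξ.1) (core_sq_pos hξ.2)]
    have dψ := (hψ ξ hξ).differentiableAt one_ne_zero
    have key : ∀ i, XD (fun η => fluxX p R i η * ψ η) ξ i +
        YD (fun η => fluxY p R i η * ψ η) ξ i =
        ψ ξ * (XD (fluxX p R i) ξ i + YD (fluxY p R i) ξ i) +
        (fluxX p R i ξ * XD ψ ξ i + fluxY p R i ξ * YD ψ ξ i) := fun i => by
      rw [XD_mul ((hflux i ξ hξ).1.differentiableAt one_ne_zero) dψ,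
        YD_mul ((hflux i ξ hξ).2.differentiableAt one_ne_zero) dψ]
      ring
    rw [Finset.sum_congr rfl fun i _ => key i, Finset.sum_add_distrib, ← Finset.mul_sum]
    linarith [mul_nonneg (h0 ξ) (divergence_flux_nonneg ha hξ)]

/-! ### Cutting off near the core -/

/-- A smooth nonincreasing cutoff: `1` for `s ≤ ρ - 2 ε` and `0` for `s ≥ ρ - ε`. -/
def cut (ρ ε s : ℝ) : ℝ := Real.smoothTransition ((ρ - s) / ε - 1)

lemma contDiff_cut (ρ ε : ℝ) : ContDiff ℝ 1 (cut ρ ε) :=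
  (Real.smoothTransition.contDiff (n := 1)).comp (by fun_prop)

lemma deriv_cut_nonpos {ε : ℝ} (hε : 0 < ε) (s : ℝ) : deriv (cut ρ ε) s ≤ 0 := by
  have : Antitone (cut ρ ε) := fun a b hab => by
    refine Real.smoothTransition.monotone ?_
    gcongr
  exact this.deriv_nonpos

lemma cut_nonneg (ρ ε s : ℝ) : 0 ≤ cut ρ ε s := Real.smoothTransition.nonneg _

lemma cut_le_one (ρ ε s : ℝ) : cut ρ ε s ≤ 1 := Real.smoothTransition.le_one _

lemma cut_eq_zero {ε s : ℝ} (hε : 0 < ε) (h : ρ - ε ≤ s) : cut ρ ε s = 0 :=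
  Real.smoothTransition.zero_of_nonpos (by rw [sub_nonpos, div_le_one hε]; linarith)

lemma cut_eq_one {ε s : ℝ} (hε : 0 < ε) (h : s ≤ ρ - 2 * ε) : cut ρ ε s = 1 :=
  Real.smoothTransition.one_of_one_le (by rw [le_sub_iff_add_le, le_div_iff₀ hε]; linarith)

lemma continuous_cut_bdist (ε : ℝ) : Continuous fun ξ : Hpt n => cut ρ ε (bdist n R ρ ξ) :=
  (contDiff_cut ρ ε).continuous.comp continuous_bdist

lemma integrable_cut_mul {f : Hpt n → ℝ} (hf : Integrable f) (ε : ℝ) :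
    Integrable fun ξ => cut ρ ε (bdist n R ρ ξ) * f ξ :=
  hf.bdd_mul (c := 1) (continuous_cut_bdist ε).aestronglyMeasurable
    (ae_of_all _ fun ξ => by
      rw [Real.norm_of_nonneg (cut_nonneg _ _ _)]
      exact cut_le_one _ _ _)

/-- The cutoff decreases in `d`, so its contribution `φ |∇d|^p (cut)'` has the favourable sign and
the test function `cut(d) φ`, supported away from the core, yields an estimate for `φ` itself. -/
lemma exists_le_cut_mul (ha : Admissible n p R ρ) (hK : IsCompact K)
    (hKT : ∀ ξ ∈ K, 0 < bdist n R ρ ξ) (hφ : ∀ ξ ∈ punct n R ρ, ContDiffAt ℝ 1 φ ξ)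
    (hz : ∀ ξ ∉ K, φ ξ = 0) (h0 : ∀ ξ, 0 ≤ φ ξ) {ε : ℝ} (hε : 0 < ε) :
    ∃ S : Hpt n → ℝ, Integrable S ∧ ∫ ξ, S ξ = 0 ∧
      ∀ ξ, S ξ ≤ cut ρ ε (bdist n R ρ ξ) *
        (hgradNorm (bdist n R ρ) ξ ^ (p - 2) * hdot (bdist n R ρ) φ ξ) := by
  have hcd : ∀ ξ ∈ punct n R ρ, ContDiffAt ℝ 1 (bdist n R ρ) ξ := fun ξ hξ =>
    contDiffAt_bdist (rr_pos ha.lt hξ.1) (core_sq_pos hξ.2)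
  have hK' : IsCompact (K ∩ {ξ | bdist n R ρ ξ ≤ ρ - ε}) :=
    hK.inter_right (isClosed_le continuous_bdist continuous_const)
  obtain ⟨S, hS, hS0, hSK, hSle⟩ := exists_divergence_le (p := p) ha hK'
    (ψ := fun ξ => cut ρ ε (bdist n R ρ ξ) * φ ξ)
    (fun ξ hξ => ⟨hKT ξ hξ.1, lt_of_le_of_lt hξ.2 (by linarith)⟩)
    (fun ξ hξ => ((contDiff_cut ρ ε).contDiffAt.comp ξ (hcd ξ hξ)).mul (hφ ξ hξ))
    (fun ξ hξ => by
      by_cases h : ξ ∈ K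
      · rw [cut_eq_zero hε (le_of_not_ge fun h' => hξ ⟨h, h'⟩), zero_mul]
      · rw [hz ξ h, mul_zero])
    (fun ξ => mul_nonneg (cut_nonneg _ _ _) (h0 ξ))
  refine ⟨S, hS, hS0, fun ξ => ?_⟩
  -- Outside the punctured torus both sides vanish: at the core because of the cutoff, elsewhere
  -- because `φ` does.
  by_cases hξ : ξ ∈ punct n R ρ
  · refine (hSle ξ hξ).trans ?_
    have hd := (hcd ξ hξ).differentiableAt one_ne_zero
    have hc : HasDerivAt (cut ρ ε) (deriv (cut ρ ε) (bdist n R ρ ξ)) (bdist n R ρ ξ) :=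
      ((contDiff_cut ρ ε).differentiable one_ne_zero _).hasDerivAt
    rw [hdot_mul (f := fun ξ => cut ρ ε (bdist n R ρ ξ)) _
      (((contDiff_cut ρ ε).contDiffAt.comp ξ (hcd ξ hξ)).differentiableAt one_ne_zero)
      ((hφ ξ hξ).differentiableAt one_ne_zero), hdot_comp _ hc hd]
    have := mul_nonneg (Real.rpow_nonneg (hgradNorm_nonneg (bdist n R ρ) ξ) (p - 2))
      (mul_nonneg (h0 ξ) (mul_nonneg (neg_nonneg.2 (deriv_cut_nonpos (ρ := ρ) hε
        (bdist n R ρ ξ))) (hdot_self_nonneg (bdist n R ρ) ξ)))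
    linear_combination this
  · rw [hSK ξ fun h => hξ ⟨hKT ξ h.1, lt_of_le_of_lt h.2 (by linarith)⟩]
    by_cases h : ξ ∈ K
    · have : ρ ≤ bdist n R ρ ξ := le_of_not_gt fun h' => hξ ⟨hKT ξ h, h'⟩
      rw [cut_eq_zero hε (by linarith), zero_mul]
    · simp [hdot, XD, YD, fderiv_eq_zero_of_notMem hK.isClosed hz h]

/-- `d` is maximal on the core, so its Fréchet derivative (a genuine or a junk one) vanishes
there. -/
lemma fderiv_bdist_core (h : bdist n R ρ ξ = ρ) : fderiv ℝ (bdist n R ρ) ξ = 0 :=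
  IsLocalMax.fderiv_eq_zero (Eventually.of_forall fun η => by rw [h]; exact bdist_le η)

/-- Removing the cutoff, by dominated convergence. -/
lemma tendsto_integral_cut {f : Hpt n → ℝ} (hf : Integrable f)
    (h0 : ∀ ξ, bdist n R ρ ξ = ρ → f ξ = 0) :
    Tendsto (fun k : ℕ => ∫ ξ, cut ρ (1 / ((k : ℝ) + 1)) (bdist n R ρ ξ) * f ξ) atTop
      (nhds (∫ ξ, f ξ)) := by
  refine tendsto_integral_of_dominated_convergence (fun ξ => ‖f ξ‖)
    (fun k => (integrable_cut_mul hf _).aestronglyMeasurable) hf.norm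
    (fun k => ae_of_all _ fun ξ => ?_) (ae_of_all _ fun ξ => ?_)
  · rw [norm_mul, Real.norm_of_nonneg (cut_nonneg _ _ _)]
    exact mul_le_of_le_one_left (norm_nonneg _) (cut_le_one _ _ _)
  · rcases (bdist_le ξ).lt_or_eq with h | h
    · refine tendsto_const_nhds.congr' ?_
      have : ∀ᶠ k : ℕ in atTop, 1 / ((k : ℝ) + 1) < (ρ - bdist n R ρ ξ) / 2 :=
        tendsto_one_div_add_atTop_nhds_zero_nat.eventually_lt_const (by linarith)
      filter_upwards [this] with k hk
      rw [cut_eq_one (by positivity) (by linarith), one_mul]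
    · simp [h0 ξ h]

/-- The distributional inequality, with the integral over the whole space. -/
lemma integral_superharmonic (ha : Admissible n p R ρ)
    (hφ : ContDiff ℝ 1 φ) (hc : HasCompactSupport φ)
    (hs : ∀ ξ ∈ tsupport φ, 0 < bdist n R ρ ξ) (h0 : ∀ ξ, 0 ≤ φ ξ) :
    0 ≤ ∫ ξ, hgradNorm (bdist n R ρ) ξ ^ (p - 2) * hdot (bdist n R ρ) φ ξ := by
  by_cases hi : Integrable fun ξ =>
    hgradNorm (bdist n R ρ) ξ ^ (p - 2) * hdot (bdist n R ρ) φ ξ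
  · refine ge_of_tendsto' (tendsto_integral_cut (R := R) (ρ := ρ) hi fun ξ hξ => ?_) fun k => ?_
    · simp [hdot, XD, YD, fderiv_bdist_core hξ]
    · obtain ⟨S, hS, hS0, hSle⟩ := exists_le_cut_mul (p := p) (K := tsupport φ) ha hc hs
        (fun ξ _ => hφ.contDiffAt) (fun ξ hξ => image_eq_zero_of_notMem_tsupport hξ) h0
        (ε := 1 / ((k : ℝ) + 1)) (by positivity)
      rw [← hS0]
      exact integral_mono hS (integrable_cut_mul hi _) hSle
  -- A non-integrable integrand has integral `0` by convention.
  · rw [integral_undef hi]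

/-! ### The Hardy inequality -/

/-- Young's inequality in the form `p a^(p-1) b ≤ b^p + (p - 1) a^p`. -/
lemma young {a b : ℝ} (hp : 1 < p) (ha : 0 < a) (hb : 0 ≤ b) :
    p * (a ^ (p - 1) * b) ≤ b ^ p + (p - 1) * a ^ p := by
  have h := one_add_mul_self_le_rpow_one_add (s := b / a - 1)
    (by linarith [div_nonneg hb ha.le]) hp.le
  rw [add_sub_cancel, Real.div_rpow hb ha.le, le_div_iff₀ (Real.rpow_pos_of_pos ha p)] at h
  have e : a ^ p = a ^ (p - 1) * a := by
    rw [← Real.rpow_add_one ha.ne', sub_add_cancel]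
  have e2 : b / a * a ^ p = a ^ (p - 1) * b := by
    rw [e]
    field_simp
  linear_combination h - p * e2

/-- The pointwise inequality behind the Hardy inequality, obtained by inserting
`φ = |u|^p d^(1-p)` into `|∇d|^(p-2) ∇d · ∇φ`. Here `g = |∇d|`, `b = |∇u|`, `s = d`, `v = u` and
`h = ∇d · ∇u`; Young's inequality is applied with `a = (p-1)/p · g |v| / s`. -/
lemma hardy_pointwise {g b s v h : ℝ} (hp : 1 < p) (hg : 0 < g) (hb : 0 ≤ b) (hs : 0 < s)
    (hh : |h| ≤ g * b) :
    ((p - 1) / p) ^ (p - 1) * (g ^ (p - 2) * (|v| ^ p * ((1 - p) * s ^ (-p) * g ^ 2) +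
      s ^ (1 - p) * (p * |v| ^ (p - 2) * v * h))) ≤
    b ^ p - ((p - 1) / p) ^ p * (g ^ p / s ^ p * |v| ^ p) := by
  have hp0 : 0 < p := by linarith
  rcases eq_or_ne v 0 with rfl | hv
  · rw [abs_zero, Real.zero_rpow hp0.ne']
    simpa using Real.rpow_nonneg hb p
  have hv' : 0 < |v| := abs_pos.2 hv
  set l := (p - 1) / p with hl
  have hl0 : 0 < l := div_pos (by linarith) hp0
  have hA : 0 < g * |v| / s := by positivity
  have hy := young hp (mul_pos hl0 hA) hb
  have eA : (g * |v| / s) ^ p = g ^ p / s ^ p * |v| ^ p := by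
    rw [Real.div_rpow (by positivity) hs.le, Real.mul_rpow hg.le hv'.le]
    ring
  have eA1 : (g * |v| / s) ^ (p - 1) = g ^ (p - 1) * |v| ^ (p - 1) * s ^ (1 - p) := by
    rw [Real.div_rpow (by positivity) hs.le, Real.mul_rpow hg.le hv'.le,
      show 1 - p = -(p - 1) by ring, Real.rpow_neg hs.le, div_eq_mul_inv]
  rw [Real.mul_rpow hl0.le hA.le, Real.mul_rpow hl0.le hA.le, eA, eA1] at hy
  have e1 : g ^ p = g ^ (p - 2) * g ^ 2 := by
    rw [← Real.rpow_natCast g 2, ← Real.rpow_add hg]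
    norm_num
  have e2 : g ^ (p - 1) = g ^ (p - 2) * g := by
    rw [← Real.rpow_add_one hg.ne']
    congr 1
    ring
  have e3 : |v| ^ (p - 1) = |v| ^ (p - 2) * |v| := by
    rw [← Real.rpow_add_one hv'.ne']
    congr 1
    ring
  have e4 : l ^ p = l ^ (p - 1) * l := by
    rw [← Real.rpow_add_one hl0.ne', sub_add_cancel]
  have e5 : p * l = p - 1 := by
    rw [hl]
    field_simp
  have hvh : v * h ≤ |v| * (g * b) := by
    calc v * h ≤ |v * h| := le_abs_self _
      _ = |v| * |h| := abs_mul _ _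
      _ ≤ _ := by gcongr
  have h3 : l ^ (p - 1) * (g ^ (p - 2) * (s ^ (1 - p) * (p * |v| ^ (p - 2) * (v * h)))) ≤
      l ^ (p - 1) * (g ^ (p - 2) * (s ^ (1 - p) * (p * |v| ^ (p - 2) * (|v| * (g * b))))) := by
    gcongr
  have e6 : s ^ (-p) = (s ^ p)⁻¹ := Real.rpow_neg hs.le p
  rw [e2, e3] at hy
  rw [e4, e6]
  rw [e4] at hy
  have e7 : l ^ (p - 1) * (g ^ p / s ^ p * |v| ^ p) * (p - 1 - (p - 1) * l - l) = 0 := by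
    rw [show p - 1 - (p - 1) * l - l = 0 by linear_combination -e5, mul_zero]
  rw [e1, div_eq_mul_inv] at hy e7 ⊢
  linear_combination h3 + hy - e7

/-- The Hardy inequality, with integrals over the whole space. -/
lemma integral_hardy (ha : Admissible n p R ρ) {u : Hpt n → ℝ} (hu : ContDiff ℝ 1 u)
    (hc : HasCompactSupport u) (hs : ∀ ξ ∈ tsupport u, 0 < bdist n R ρ ξ) :
    ((p - 1) / p) ^ p * ∫ ξ, (hgradNorm (bdist n R ρ) ξ ^ p / bdist n R ρ ξ ^ p) * |u ξ| ^ p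
      ≤ ∫ ξ, hgradNorm u ξ ^ p := by
  have hp := ha.one_lt
  have hp0 : 0 < p := by linarith
  have hl0 : 0 < (p - 1) / p := div_pos (by linarith) hp0
  have hfd : Continuous (fderiv ℝ u) := hu.continuous_fderiv one_ne_zero
  have huz : ∀ ξ ∉ tsupport u, u ξ = 0 := fun ξ hξ => image_eq_zero_of_notMem_tsupport hξ
  have hgz : ∀ ξ ∉ tsupport u, hgradNorm u ξ = 0 := fun ξ hξ => by
    simp [hgradNorm, XD, YD, fderiv_eq_zero_of_notMem (isClosed_tsupport u) huz hξ]
  have hB : Integrable fun ξ => hgradNorm u ξ ^ p := by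
    refine Continuous.integrable_of_hasCompactSupport ?_ (HasCompactSupport.intro hc fun ξ hξ => by
      rw [hgz ξ hξ, Real.zero_rpow hp0.ne'])
    refine Continuous.rpow_const ?_ fun _ => Or.inr hp0.le
    unfold hgradNorm XD YD
    refine Real.continuous_sqrt.comp (continuous_finsetSum _ fun i _ => ?_)
    exact ((hfd.clm_apply (by fun_prop)).pow 2).add ((hfd.clm_apply (by fun_prop)).pow 2)
  by_cases hi : Integrable fun ξ =>
    (hgradNorm (bdist n R ρ) ξ ^ p / bdist n R ρ ξ ^ p) * |u ξ| ^ p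
  swap
  -- If the left integrand is not integrable, its integral is `0` by convention.
  · rw [integral_undef hi, mul_zero]
    exact integral_nonneg fun ξ => Real.rpow_nonneg (hgradNorm_nonneg _ _) _
  have hcore : ∀ ξ, bdist n R ρ ξ = ρ → hgradNorm (bdist n R ρ) ξ = 0 := fun ξ hξ => by
    simp [hgradNorm, XD, YD, fderiv_bdist_core hξ]
  refine le_of_tendsto' ((tendsto_integral_cut (R := R) (ρ := ρ) hi fun ξ hξ => by
    simp [hcore ξ hξ, Real.zero_rpow hp0.ne']).const_mul _) fun k => ?_
  have hzφ : ∀ ξ ∉ tsupport u, |u ξ| ^ p * bdist n R ρ ξ ^ (1 - p) = 0 := fun ξ hξ => by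
    rw [huz ξ hξ, abs_zero, Real.zero_rpow hp0.ne', zero_mul]
  have hup : ContDiff ℝ 1 fun ξ => |u ξ| ^ p := (contDiff_norm_rpow hp).comp hu
  have hcd : ∀ ξ ∈ punct n R ρ, ContDiffAt ℝ 1 (bdist n R ρ) ξ := fun ξ hξ =>
    contDiffAt_bdist (rr_pos ha.lt hξ.1) (core_sq_pos hξ.2)
  have hdp : ∀ ξ ∈ punct n R ρ, ContDiffAt ℝ 1 (fun η => bdist n R ρ η ^ (1 - p)) ξ :=
    fun ξ hξ => (hcd ξ hξ).rpow_const_of_ne hξ.1.ne'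
  obtain ⟨S, hS, hS0, hSle⟩ := exists_le_cut_mul (p := p) (K := tsupport u)
    (φ := fun ξ => |u ξ| ^ p * bdist n R ρ ξ ^ (1 - p)) ha hc hs
    (fun ξ hξ => hup.contDiffAt.mul (hdp ξ hξ)) hzφ
    (fun ξ => by
      by_cases hξ : ξ ∈ tsupport u
      · exact mul_nonneg (Real.rpow_nonneg (abs_nonneg _) _) (Real.rpow_nonneg (hs ξ hξ).le _)
      · exact (hzφ ξ hξ).ge)
    (ε := 1 / ((k : ℝ) + 1)) (by positivity)
  set χ := fun ξ : Hpt n => cut ρ (1 / ((k : ℝ) + 1)) (bdist n R ρ ξ) with hχ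
  have hpt : ∀ ξ, ((p - 1) / p) ^ (p - 1) * S ξ ≤ χ ξ * hgradNorm u ξ ^ p -
      ((p - 1) / p) ^ p * (χ ξ * (hgradNorm (bdist n R ρ) ξ ^ p / bdist n R ρ ξ ^ p *
        |u ξ| ^ p)) := fun ξ => by
    refine (mul_le_mul_of_nonneg_left (hSle ξ) (Real.rpow_nonneg hl0.le _)).trans ?_
    by_cases hξ : ξ ∈ punct n R ρ
    · have hd := (hcd ξ hξ).differentiableAt one_ne_zero
      have hg : 0 < hgradNorm (bdist n R ρ) ξ := by
        refine lt_of_le_of_ne (hgradNorm_nonneg _ _) fun h => ?_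
        have := hgradNorm_bdist_sq (ρ := ρ) (rr_pos ha.lt hξ.1) (core_sq_pos hξ.2)
        have h' := gradSq_pos (z := (rr ξ, ξ.2.2)) (rr_pos ha.lt hξ.1) (core_sq_pos hξ.2)
        rw [← this, ← h] at h'
        norm_num at h'
      have key := hardy_pointwise (v := u ξ) hp hg (hgradNorm_nonneg u ξ) hξ.1
        (abs_hdot_le (bdist n R ρ) u ξ)
      have hsd : HasDerivAt (fun x : ℝ => x ^ (1 - p))
          ((1 - p) * bdist n R ρ ξ ^ (-p)) (bdist n R ρ ξ) := by
        have := Real.hasDerivAt_rpow_const (p := 1 - p) (Or.inl hξ.1.ne')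
        rwa [show 1 - p - 1 = -p by ring] at this
      rw [hdot_mul (f := fun ξ => |u ξ| ^ p) _ (hup.differentiable one_ne_zero ξ)
        ((hdp ξ hξ).differentiableAt one_ne_zero), hdot_comp _ hsd hd,
        hdot_comp _ (hasDerivAt_abs_rpow (u ξ) hp) (hu.differentiable one_ne_zero ξ),
        ← hgradNorm_sq]
      have := mul_le_mul_of_nonneg_left key (cut_nonneg ρ (1 / ((k : ℝ) + 1)) (bdist n R ρ ξ))
      linear_combination this
    · by_cases h : ξ ∈ tsupport u
      · have : ρ ≤ bdist n R ρ ξ := le_of_not_gt fun h' => hξ ⟨hs ξ h, h'⟩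
        have hχ0 : χ ξ = 0 := cut_eq_zero (by positivity) (by
          have : (0 : ℝ) < 1 / ((k : ℝ) + 1) := by positivity
          linarith)
        have hχ1 : cut ρ (1 / ((k : ℝ) + 1)) (bdist n R ρ ξ) = 0 := hχ0
        rw [hχ0, hχ1]
        simp
      · simp [hdot, XD, YD, fderiv_eq_zero_of_notMem (isClosed_tsupport u) hzφ h, hgz ξ h,
          huz ξ h, Real.zero_rpow hp0.ne']
  have hχB : Integrable fun ξ => χ ξ * hgradNorm u ξ ^ p := integrable_cut_mul hB _
  have hχA := (integrable_cut_mul (R := R) (ρ := ρ) hi (1 / ((k : ℝ) + 1))).const_mul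
    (((p - 1) / p) ^ p)
  have h1 := integral_mono (hS.const_mul _) (hχB.sub hχA) hpt
  rw [integral_const_mul, hS0, mul_zero, integral_sub' hχB hχA, integral_const_mul] at h1
  have h2 : ∫ ξ, χ ξ * hgradNorm u ξ ^ p ≤ ∫ ξ, hgradNorm u ξ ^ p :=
    integral_mono hχB hB fun ξ => mul_le_of_le_one_left
      (Real.rpow_nonneg (hgradNorm_nonneg _ _) _) (cut_le_one _ _ _)
  linarith

end torus

end TorusHardy

open Heis in
/-- distributional p-superharmonicity and the Hardy inequality on the torus T,
for the Euclidean distance d to ∂T. -/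
theorem torus_hardy (n : ℕ) (hn : 1 ≤ n) (p R ρ : ℝ) (hp : 1 < p)
    (hρ : 0 < ρ) (hRρ : ρ < R) (β : ℝ)
    (hβ : (p < 2 ∧
        β = max ((2 * (n : ℝ) + p - 2) / (p - 1)) ((2 * (n : ℝ) - p + 1) / (2 * (2 - p)))) ∨
      (p = 2 ∧ β = 2 * (n : ℝ)) ∨
      ((13 + Real.sqrt (32 * (n : ℝ) - 7)) / 8 ≤ p ∧ β = 2 * (n : ℝ) + p - 2) ∨
      (2 < p ∧ p < (13 + Real.sqrt (32 * (n : ℝ) - 7)) / 8 ∧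
        ∃ a : ℝ, 0 < a ∧
          (2 * (n : ℝ) + p - 3) ^ 2 * a ^ 2 +
              4 * ((p - 2) * (2 * (n : ℝ) + p - 3) + (p - 1) * (2 * (n : ℝ) - 1)) * a -
              4 * (2 * p - 3) = 0 ∧
          β = 1 + 1 / a))
    (hR1 : ρ + ((2 * (n : ℝ) - 1) * ρ / 4) ^ ((1 : ℝ) / 3) ≤ R) (hR2 : β * ρ ≤ R) :
    ∀ T : Set (Hpt n), T = {ξ : Hpt n | (rr ξ - R) ^ 2 + ξ.2.2 ^ 2 < ρ ^ 2} →
    ∀ d : Hpt n → ℝ, d = (fun η => ρ - Real.sqrt ((rr η - R) ^ 2 + η.2.2 ^ 2)) →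
      (∀ φ : Hpt n → ℝ, IsTest T φ → (∀ ξ, 0 ≤ φ ξ) →
        0 ≤ ∫ ξ in T, hgradNorm d ξ ^ (p - 2) * hdot d φ ξ) ∧
      (∀ u : Hpt n → ℝ, IsTest T u →
        ((p - 1) / p) ^ p * ∫ ξ in T, (hgradNorm d ξ ^ p / d ξ ^ p) * |u ξ| ^ p
          ≤ ∫ ξ in T, hgradNorm u ξ ^ p) := by
  intro T hT d hd
  obtain ⟨hsm, hlg⟩ := TorusHardy.radius_bounds hn hp hρ hβ hR2
  have hn1 : (1 : ℝ) ≤ n := by exact_mod_cast hn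
  have ha : TorusHardy.Admissible n p R ρ := by
    refine ⟨hn, hp, hρ, hRρ, ?_, hsm, hlg⟩
    have h0 : 0 ≤ (2 * (n : ℝ) - 1) * ρ / 4 := by
      have : 0 ≤ 2 * (n : ℝ) - 1 := by linarith
      positivity
    have h1 : ((2 * (n : ℝ) - 1) * ρ / 4) ^ ((1 : ℝ) / 3) ≤ R - ρ := by linarith
    have h2 := pow_le_pow_left₀ (Real.rpow_nonneg h0 _) h1 3
    rwa [← Real.rpow_natCast, ← Real.rpow_mul h0,
      show (1 : ℝ) / 3 * ((3 : ℕ) : ℝ) = 1 by norm_num, Real.rpow_one] at h2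
  have hd' : d = TorusHardy.bdist n R ρ := hd
  have hTd : ∀ ξ, ξ ∈ T ↔ 0 < TorusHardy.bdist n R ρ ξ := fun ξ => by
    rw [hT]
    exact TorusHardy.core_sq_lt hρ
  rw [hd']
  refine ⟨fun φ hφ h0 => ?_, fun u hu => ?_⟩
  · have hz : ∀ ξ ∉ tsupport φ, φ ξ = 0 := fun ξ hξ => image_eq_zero_of_notMem_tsupport hξ
    rw [setIntegral_eq_integral_of_forall_compl_eq_zero fun ξ hξ => by
      simp [hdot, XD, YD, TorusHardy.fderiv_eq_zero_of_notMem (isClosed_tsupport φ) hz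
        fun h => hξ (hφ.2.2 h)]]
    exact TorusHardy.integral_superharmonic ha (hφ.1.of_le (by norm_cast)) hφ.2.1
      (fun ξ hξ => (hTd ξ).1 (hφ.2.2 hξ)) h0
  · have hz : ∀ ξ ∉ tsupport u, u ξ = 0 := fun ξ hξ => image_eq_zero_of_notMem_tsupport hξ
    have hp0 : p ≠ 0 := by linarith
    rw [setIntegral_eq_integral_of_forall_compl_eq_zero fun ξ hξ => by
        simp [hz ξ fun h => hξ (hu.2.2 h), Real.zero_rpow hp0],
      setIntegral_eq_integral_of_forall_compl_eq_zero fun ξ hξ => by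
        simp [hgradNorm, XD, YD, TorusHardy.fderiv_eq_zero_of_notMem (isClosed_tsupport u) hz
          fun h => hξ (hu.2.2 h), Real.zero_rpow hp0]]
    exact TorusHardy.integral_hardy ha (hu.1.of_le (by norm_cast)) hu.2.1
      fun ξ hξ => (hTd ξ).1 (hu.2.2 hξ)
end
end
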